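/- arXiv:2309.01463 — 4 statements merged into one kernel-verified Lean document; each statement's English description precedes it below -/
import Mathlib

section
/- Any pair ⟨T₀, T₁⟩ of isomorphic caterpillars admits a linearly separable MW-[1] drawing (that is, a linearly separable mutual witness Gabriel drawing). -/
/-!
The caterpillar is drawn in clusters, one for each spine vertex, stacked at vertical distance `g`.
The first copy lies to the left of the vertical axis and the second one to the right; the two points
of a vertex have the same distance (depth) from the axis. By Thales, a right point `w` lies
in the Gabriel disk of two left points `u`, `v` iff `(d_u + d_w)(d_v + d_w)` is at most
`(y_w - y_u)(y_v - y_w)`, so only points at heights strictly between `u` and `v` can be witnesses,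
and depth protects against them.

In each cluster, of height `K`, the left spine vertex is at the bottom and the right one at the top,
and in between left and right leaves alternate at unit distance and depth `1 / 2`. Hence a leaf
typically has a witness just above or just below it which separates it from everything on that side except
its own spine vertex, protected by its depth of order `K ^ 2`. The delicate case is a leaf next to a
cluster without leaves: there the witness has to be a spine vertex, although spine vertices must not
separate consecutive spine vertices. Spine vertices without leaves have depth `K ^ 2`, those with
leaves have depth `4 * K ^ 2`, and `K * g = 3 * K ^ 4`. The opposite
copy of a spine vertex without leaves then separates this vertex from the leaves of other clusters, as `2 K ^ 4 < 3 K ^ 4` up to lower order terms, while the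
edges of the spine survive, as `3 K ^ 4 < 4 K ^ 4`.

A half-turn swaps the two sides and reverses the layout (`Layout.reflect`), so it is enough to
analyse the edges on the left (`Layout.adj_iff`). The spine is numbered by distance from an end
(`exists_path_numbering`), which gives every caterpillar a layout.
-/

open scoped RealInnerProductSpace ENNReal

noncomputable section

/-- The Euclidean plane. -/
abbrev Plane : Type := EuclideanSpace ℝ (Fin 2)

/-- The open β-region of two points, for finite β ≥ 1. -/
def betaOpen (p q : Plane) (β : ℝ) : Set Plane :=
  Metric.ball ((1 - β / 2) • p + (β / 2) • q) (β * dist p q / 2) ∩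
    Metric.ball ((β / 2) • p + (1 - β / 2) • q) (β * dist p q / 2)

/-- The closed β-region of two points, for finite β ≥ 1. -/
def betaClosed (p q : Plane) (β : ℝ) : Set Plane :=
  Metric.closedBall ((1 - β / 2) • p + (β / 2) • q) (β * dist p q / 2) ∩
    Metric.closedBall ((β / 2) • p + (1 - β / 2) • q) (β * dist p q / 2)

/-- The open ∞-region: the open strip of points whose orthogonal projection on the
line through `p` and `q` lies strictly between `p` and `q`. -/
def stripOpen (p q : Plane) : Set Plane :=
  {w | 0 < ⟪w - p, q - p⟫ ∧ 0 < ⟪w - q, p - q⟫}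

/-- The closed ∞-region. -/
def stripClosed (p q : Plane) : Set Plane :=
  {w | 0 ≤ ⟪w - p, q - p⟫ ∧ 0 ≤ ⟪w - q, p - q⟫}

/-- The open β-region, for β ∈ [1,∞] encoded as `ℝ≥0∞`. -/
def Ropen (p q : Plane) (β : ℝ≥0∞) : Set Plane :=
  if β = ⊤ then stripOpen p q else betaOpen p q β.toReal

/-- The closed β-region, for β ∈ [1,∞] encoded as `ℝ≥0∞`. -/
def Rclosed (p q : Plane) (β : ℝ≥0∞) : Set Plane :=
  if β = ⊤ then stripClosed p q else betaClosed p q β.toReal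

/-- A drawing of a pair of graphs: a pair of injective maps with disjoint images. -/
def IsDrawingPair {V₀ V₁ : Type*} (Γ₀ : V₀ → Plane) (Γ₁ : V₁ → Plane) : Prop :=
  Function.Injective Γ₀ ∧ Function.Injective Γ₁ ∧
    Disjoint (Set.range Γ₀) (Set.range Γ₁)

/-- Mutual witness β-drawing (open/closed version): adjacent pairs have no witness in the
closed β-region, non-adjacent pairs have a witness in the open β-region. -/
def IsMWDrawing {V₀ V₁ : Type*} (G₀ : SimpleGraph V₀) (G₁ : SimpleGraph V₁)
    (Γ₀ : V₀ → Plane) (Γ₁ : V₁ → Plane) (β : ℝ≥0∞) : Prop :=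
  IsDrawingPair Γ₀ Γ₁ ∧
  (∀ u v : V₀, u ≠ v →
    (G₀.Adj u v → ∀ w : V₁, Γ₁ w ∉ Rclosed (Γ₀ u) (Γ₀ v) β) ∧
    (¬ G₀.Adj u v → ∃ w : V₁, Γ₁ w ∈ Ropen (Γ₀ u) (Γ₀ v) β)) ∧
  (∀ u v : V₁, u ≠ v →
    (G₁.Adj u v → ∀ w : V₀, Γ₀ w ∉ Rclosed (Γ₁ u) (Γ₁ v) β) ∧
    (¬ G₁.Adj u v → ∃ w : V₀, Γ₀ w ∈ Ropen (Γ₁ u) (Γ₁ v) β))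

/-- Mutual witness MW-[β] drawing (closed version): adjacency iff no witness in the
closed β-region. -/
def IsMWClosedDrawing {V₀ V₁ : Type*} (G₀ : SimpleGraph V₀) (G₁ : SimpleGraph V₁)
    (Γ₀ : V₀ → Plane) (Γ₁ : V₁ → Plane) (β : ℝ≥0∞) : Prop :=
  IsDrawingPair Γ₀ Γ₁ ∧
  (∀ u v : V₀, u ≠ v →
    (G₀.Adj u v ↔ ∀ w : V₁, Γ₁ w ∉ Rclosed (Γ₀ u) (Γ₀ v) β)) ∧
  (∀ u v : V₁, u ≠ v →
    (G₁.Adj u v ↔ ∀ w : V₀, Γ₀ w ∉ Rclosed (Γ₁ u) (Γ₁ v) β))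

/-- Linear separability of a pair of drawings. -/
def LinearlySeparable {V₀ V₁ : Type*} (Γ₀ : V₀ → Plane) (Γ₁ : V₁ → Plane) : Prop :=
  ∃ (a : Plane) (c : ℝ), a ≠ 0 ∧ (∀ v, ⟪a, Γ₀ v⟫ < c) ∧ (∀ v, c < ⟪a, Γ₁ v⟫)

/-- A caterpillar: a (finite) tree such that removing all of its leaves yields a
nonempty path.  The set of non-leaf vertices is nonempty and the induced subgraph
on it is connected with maximum degree at most two (being a subgraph of a tree it
is acyclic, hence a path). -/
def IsCaterpillar {V : Type*} [Fintype V] (G : SimpleGraph V) : Prop :=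
  G.IsTree ∧
    {v : V | ¬ ∃! u, G.Adj v u}.Nonempty ∧
    (G.induce {v : V | ¬ ∃! u, G.Adj v u}).Connected ∧
    ∀ v : {v : V | ¬ ∃! u, G.Adj v u},
      Set.ncard {u : {v : V | ¬ ∃! u, G.Adj v u} |
        (G.induce {v : V | ¬ ∃! u, G.Adj v u}).Adj v u} ≤ 2

/-! ### The Gabriel region in coordinates -/

/-- Thales: `w` lies in the closed disk with diameter `pq` iff `⟨w - p, w - q⟩ ≤ 0`. -/
lemma mem_gab (p q w : Plane) : w ∈ betaClosed p q 1 ↔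
    (w 0 - p 0) * (w 0 - q 0) + (w 1 - p 1) * (w 1 - q 1) ≤ 0 := by
  have h1 : (1 - 1/2 : ℝ) = 1/2 := by norm_num
  have key : dist w ((1/2 : ℝ) • p + (1/2 : ℝ) • q) ≤ 1 * dist p q / 2 ↔
    (w 0 - p 0) * (w 0 - q 0) + (w 1 - p 1) * (w 1 - q 1) ≤ 0 := by
    rw [← abs_of_nonneg (dist_nonneg (x := w)), ← sq_le_sq₀ (by positivity) (by positivity), sq_abs,
      div_pow, mul_pow, EuclideanSpace.dist_sq_eq, EuclideanSpace.dist_sq_eq]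
    simp only [Fin.sum_univ_two, Real.dist_eq, sq_abs, PiLp.add_apply, PiLp.smul_apply, smul_eq_mul]
    constructor <;> intro h <;> nlinarith
  simp only [betaClosed, h1, Set.mem_inter_iff, Metric.mem_closedBall, key, and_self]

/-! ### Caterpillar layouts and their drawing -/

/-- A layout of `G` exhibits it as a caterpillar: the spine `S` occupies an interval of integer
positions `pos`, with consecutive spine vertices adjacent, and every vertex outside `S` is a leaf
attached to the spine vertex of the same position. The ranks `rk` are pairwise distinct integers in
`[0, N)`, used to order the leaves of each spine vertex. -/
structure Layout {V : Type} (G : SimpleGraph V) where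
  S : Set V
  pos : V → ℤ
  rk : V → ℤ
  N : ℤ
  rk_inj : Function.Injective rk
  rk_nonneg : ∀ v, 0 ≤ rk v
  rk_lt : ∀ v, rk v + 1 ≤ N
  spine_inj : ∀ u ∈ S, ∀ v ∈ S, pos u = pos v → u = v
  spine_adj : ∀ u ∈ S, ∀ v ∈ S, G.Adj u v ↔ pos u + 1 = pos v ∨ pos v + 1 = pos u
  spine_leaf : ∀ u ∈ S, ∀ v ∉ S, G.Adj u v ↔ pos u = pos v
  leaf_leaf : ∀ u ∉ S, ∀ v ∉ S, ¬ G.Adj u v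
  between : ∀ u ∈ S, ∀ v ∈ S, pos u + 1 < pos v → ∃ w ∈ S, pos w = pos u + 1

namespace Layout
variable {V : Type} {G : SimpleGraph V} (L : Layout G)

/-- The height of a cluster, i.e. of the set of all points drawn for one position. -/
def K : ℝ := 2 * L.N + 1
/-- The vertical offset between clusters of consecutive positions. The relation `K * g = 3 * K ^ 4`
is what balances the depths `K ^ 2` and `4 * K ^ 2` of spine vertices. -/
def g : ℝ := 3 * L.K ^ 3
open Classical in
/-- Distance of the two points of `v` from the separating vertical axis: tiny for leaves, large for
spine vertices, and larger for spine vertices carrying leaves than for those carrying none. -/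
def depth (v : V) : ℝ :=
  if v ∈ L.S then (if ∃ u ∉ L.S, L.pos u = L.pos v then 4 * L.K ^ 2 else L.K ^ 2) else 1 / 2
open Classical in
/-- Height of the point of `v` on the left side: spine vertices at the bottom of their cluster,
leaves at odd offsets inside it. -/
def yA (v : V) : ℝ := L.pos v * L.g + if v ∈ L.S then (0 : ℝ) else 2 * (L.rk v : ℝ) + 1
open Classical in
/-- Height of the point of `v` on the right side: spine vertices at the top of their cluster,
leaves one unit above their left counterpart. -/
def yB (v : V) : ℝ := L.pos v * L.g + if v ∈ L.S then L.K else 2 * (L.rk v : ℝ) + 2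

lemma yA_spine {v : V} (h : v ∈ L.S) : L.yA v = L.pos v * L.g := by simp [yA, h]
lemma yB_spine {v : V} (h : v ∈ L.S) : L.yB v = L.pos v * L.g + L.K := by simp [yB, h]
lemma yA_leaf {v : V} (h : v ∉ L.S) : L.yA v = L.pos v * L.g + (2 * L.rk v + 1) := by
  simp [yA, h]
lemma yB_leaf {v : V} (h : v ∉ L.S) : L.yB v = L.pos v * L.g + (2 * L.rk v + 2) := by
  simp [yB, h]

/-- The layout read backwards. In the drawing this is the half-turn that swaps the two sides. -/
def reflect : Layout G where
  S := L.S
  pos v := - L.pos v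
  rk v := L.N - 1 - L.rk v
  N := L.N
  rk_inj u v h := L.rk_inj (by simpa using h)
  rk_nonneg v := by have := L.rk_lt v; omega
  rk_lt v := by have := L.rk_nonneg v; omega
  spine_inj u hu v hv h := L.spine_inj u hu v hv (by simpa using h)
  spine_adj u hu v hv := by rw [L.spine_adj u hu v hv]; omega
  spine_leaf u hu v hv := by rw [L.spine_leaf u hu v hv]; omega
  leaf_leaf := L.leaf_leaf
  between u hu v hv h := by
    -- step down from `v` to `u`, one position at a time
    obtain ⟨n, hn⟩ : ∃ n : ℕ, L.pos u = L.pos v + 2 + n :=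
      ⟨(L.pos u - L.pos v - 2).toNat, by omega⟩
    clear h
    induction n generalizing v with
    | zero =>
      obtain ⟨w, hw, hw'⟩ := L.between v hv u hu (by omega)
      exact ⟨w, hw, by push_cast at hn; omega⟩
    | succ n ih =>
      obtain ⟨w, hw, hw'⟩ := L.between v hv u hu (by omega)
      exact ih w hw (by push_cast at hn ⊢; omega)

lemma reflect_depth (v : V) : L.reflect.depth v = L.depth v := by
  have h : (∃ u ∉ L.S, -L.pos u = -L.pos v) ↔ ∃ u ∉ L.S, L.pos u = L.pos v := by
    simp only [neg_inj]
  have hK : L.reflect.K = L.K := rfl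
  classical
  unfold depth
  rw [hK]
  exact if_congr Iff.rfl (if_congr h rfl rfl) rfl

lemma reflect_yA (v : V) : L.reflect.yA v = L.K - L.yB v := by
  by_cases h : v ∈ L.S
  · rw [L.reflect.yA_spine h, L.yB_spine h]
    simp only [reflect, K, g]; push_cast; ring
  · rw [L.reflect.yA_leaf h, L.yB_leaf h]
    simp only [reflect, K, g]; push_cast; ring

lemma reflect_yB (v : V) : L.reflect.yB v = L.K - L.yA v := by
  by_cases h : v ∈ L.S
  · rw [L.reflect.yB_spine h, L.yA_spine h]
    simp only [reflect, K, g]; push_cast; ring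
  · rw [L.reflect.yB_leaf h, L.yA_leaf h]
    simp only [reflect, K, g]; push_cast; ring

lemma three_le_K (v : V) : 3 ≤ L.K := by
  have h := L.rk_nonneg v
  have h' := L.rk_lt v
  have : (1 : ℝ) ≤ L.N := by exact_mod_cast (by omega : 1 ≤ L.N)
  unfold K; linarith

lemma depth_leaf {v : V} (h : v ∉ L.S) : L.depth v = 1 / 2 := by simp [depth, h]
lemma depth_leafy {u v : V} (h : v ∈ L.S) (hu : u ∉ L.S) (e : L.pos u = L.pos v) :
    L.depth v = 4 * L.K ^ 2 := by
  unfold depth; rw [if_pos h, if_pos ⟨u, hu, e⟩]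
lemma depth_spine {v : V} (h : v ∈ L.S) : L.K ^ 2 ≤ L.depth v ∧ L.depth v ≤ 4 * L.K ^ 2 := by
  unfold depth; rw [if_pos h]; constructor <;> split_ifs <;> nlinarith [sq_nonneg L.K]
lemma half_le_depth (v : V) : 1 / 2 ≤ L.depth v := by
  have := L.three_le_K v
  by_cases h : v ∈ L.S
  · nlinarith [L.depth_spine h]
  · exact (L.depth_leaf h).ge
lemma yA_mem (v : V) : L.pos v * L.g ≤ L.yA v ∧ L.yA v ≤ L.pos v * L.g + L.K := by
  have h : (0 : ℝ) ≤ L.rk v := by exact_mod_cast L.rk_nonneg v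
  have h' : (L.rk v : ℝ) + 1 ≤ L.N := by exact_mod_cast L.rk_lt v
  unfold yA K; constructor <;> split_ifs <;> linarith
lemma yB_mem (v : V) : L.pos v * L.g ≤ L.yB v ∧ L.yB v ≤ L.pos v * L.g + L.K := by
  have h : (0 : ℝ) ≤ L.rk v := by exact_mod_cast L.rk_nonneg v
  have h' : (L.rk v : ℝ) + 1 ≤ L.N := by exact_mod_cast L.rk_lt v
  unfold yB K; constructor <;> split_ifs <;> linarith

lemma g_big (v : V) : 9 * L.K ^ 2 ≤ L.g := by
  have := L.three_le_K v
  unfold g; nlinarith [sq_nonneg L.K]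

lemma pos_gap (u v : V) (n : ℕ) (h : L.pos u + n ≤ L.pos v) :
    L.pos u * L.g + n * L.g ≤ L.pos v * L.g := by
  have h1 : (L.pos u : ℝ) + n ≤ L.pos v := by exact_mod_cast h
  have := L.g_big v
  have h3 : 0 ≤ L.g := by nlinarith [sq_nonneg L.K]
  nlinarith

/-- The power of the right point of `w` with respect to the circle whose diameter joins the left
points of `u` and `v`. It is positive iff `w` is not a witness against the edge `uv`. -/
def power (u v w : V) : ℝ :=
  (L.depth u + L.depth w) * (L.depth v + L.depth w) + (L.yB w - L.yA u) * (L.yB w - L.yA v)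

lemma power_comm (u v w : V) : L.power u v w = L.power v u w := by unfold power; ring

/-- No witness between a leaf and its own spine vertex: the two are at height distance at most `K`,
which is too small compared with the depth `4 * K ^ 2` of a spine vertex carrying leaves. -/
lemma power_leaf_spine {u v : V} (hu : u ∉ L.S) (hv : v ∈ L.S) (e : L.pos u = L.pos v) (w : V) :
    0 < L.power u v w := by
  have hK := L.three_le_K v
  have hw := L.half_le_depth w
  have h1 := L.yA_mem u
  have h2 := L.yA_mem v
  rw [e] at h1
  unfold power
  rw [L.depth_leaf hu, L.depth_leafy hv hu e]
  have h3 : (L.yA u - L.yA v) ^ 2 ≤ L.K ^ 2 := sq_le_sq' (by linarith) (by linarith)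
  have h4 : 1 * (4 * L.K ^ 2) ≤ (1 / 2 + L.depth w) * (4 * L.K ^ 2 + L.depth w) := by
    gcongr <;> linarith
  nlinarith [sq_nonneg (2 * L.yB w - L.yA u - L.yA v), mul_pos (by linarith : 0 < L.K) (by linarith : 0 < L.K)]

/-- No witness between consecutive spine vertices: only right points in the cluster of `u` lie
between them, and there the product of the height differences is at most `K * g = 3 * K ^ 4`. The
product of the depths is at least `4 * K ^ 4`: a witness candidate is either the spine vertex `u`
itself, or a leaf at `u`, in which case `u` has depth `4 * K ^ 2`. -/
lemma power_spine_spine {u v : V} (hu : u ∈ L.S) (hv : v ∈ L.S) (e : L.pos u + 1 = L.pos v)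
    (w : V) : 0 < L.power u v w := by
  have hK := L.three_le_K v
  have hg := L.g_big v
  have hw := L.half_le_depth w
  have hyw := L.yB_mem w
  have hu' := L.depth_spine hu
  have hv' := L.depth_spine hv
  have hgK : L.K < L.g := by nlinarith
  have hu0 : 0 < L.depth u := by nlinarith
  have hv0 : 0 < L.depth v := by nlinarith
  have hprod : 0 < (L.depth u + L.depth w) * (L.depth v + L.depth w) := by positivity
  have huv : L.pos v * L.g = L.pos u * L.g + L.g := by rw [← e]; push_cast; ring
  unfold power
  rw [L.yA_spine hu, L.yA_spine hv]
  rcases lt_trichotomy (L.pos w) (L.pos u) with h | h | h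
  · have := L.pos_gap w u 1 (by push_cast; omega)
    push_cast at this
    nlinarith [mul_pos (by linarith : 0 < L.pos u * L.g - L.yB w)
      (by linarith : 0 < L.pos v * L.g - L.yB w)]
  · rw [h] at hyw
    have hb : L.K * L.g < (L.depth u + L.depth w) * (L.depth v + L.depth w) := by
      have hK2 : 0 < L.K ^ 2 := by positivity
      have : L.K * L.g = 3 * (L.K ^ 2 * L.K ^ 2) := by unfold g; ring
      rw [this]
      by_cases hS : w ∈ L.S
      · have := L.depth_spine hS
        have : (2 * L.K ^ 2) * (2 * L.K ^ 2) ≤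
          (L.depth u + L.depth w) * (L.depth v + L.depth w) := by gcongr <;> linarith
        nlinarith
      · rw [L.depth_leafy hu hS h]
        have : (4 * L.K ^ 2) * (L.K ^ 2) ≤
          (4 * L.K ^ 2 + L.depth w) * (L.depth v + L.depth w) := by gcongr <;> linarith
        nlinarith
    have : (L.yB w - L.pos u * L.g) * (L.pos v * L.g - L.yB w) ≤ L.K * L.g := by
      apply mul_le_mul <;> linarith
    linarith
  · have := L.pos_gap v w 0 (by push_cast; omega)
    push_cast at this
    have := mul_nonneg (by linarith : 0 ≤ L.yB w - L.pos u * L.g)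
      (by linarith : 0 ≤ L.yB w - L.pos v * L.g)
    linarith

/-- The right copy of the lower of two leaves is a witness between their left copies. -/
lemma power_leaf_leaf {u v : V} (hu : u ∉ L.S) (hv : v ∉ L.S)
    (h : L.pos u < L.pos v ∨ L.pos u = L.pos v ∧ L.rk u < L.rk v) : L.power u v u ≤ 0 := by
  have hK := L.three_le_K v
  have hg := L.g_big v
  have hgap : L.yB u + 1 ≤ L.yA v := by
    rcases h with h | ⟨h, h'⟩
    · have := L.pos_gap u v 1 (by push_cast; omega)
      have := L.yB_mem u
      have := L.yA_mem v
      push_cast at *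
      nlinarith
    · have : (L.rk u : ℝ) + 1 ≤ L.rk v := by exact_mod_cast h'
      rw [L.yB_leaf hu, L.yA_leaf hv, h]; linarith
  unfold power
  rw [L.depth_leaf hu, L.depth_leaf hv]
  have : L.yB u - L.yA u = 1 := by rw [L.yB_leaf hu, L.yA_leaf hu]; ring
  rw [this]; linarith

/-- The right copy of a leaf is a witness between the leaf and any later spine vertex. -/
lemma power_leaf_spine_lt {u v : V} (hu : u ∉ L.S) (hv : v ∈ L.S) (h : L.pos u < L.pos v) :
    L.power u v u ≤ 0 := by
  have hK := L.three_le_K v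
  have hg := L.g_big v
  have hd := L.depth_spine hv
  have := L.pos_gap u v 1 (by push_cast; omega)
  have := L.yB_mem u
  unfold power
  have h1 : L.yB u - L.yA u = 1 := by rw [L.yB_leaf hu, L.yA_leaf hu]; ring
  rw [L.depth_leaf hu, h1, L.yA_spine hv]
  push_cast at *
  nlinarith

/-- A witness between a spine vertex and a leaf of a later cluster: the right copy of any leaf at the
spine vertex, if there is one, and otherwise the right copy of the spine vertex, whose depth is then
only `K ^ 2`, so that its contribution `2 * K ^ 4` to the depths is below `K * g = 3 * K ^ 4`. -/
lemma power_spine_leaf_lt {u v : V} (hu : u ∉ L.S) (hv : v ∈ L.S) (h : L.pos v < L.pos u) :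
    ∃ w, L.power u v w ≤ 0 := by
  have hK := L.three_le_K v
  have hg := L.g_big v
  have hd := L.depth_spine hv
  have hgap := L.pos_gap v u 1 (by push_cast; omega)
  have hyu := L.yA_mem u
  push_cast at hgap
  by_cases hl : ∃ k ∉ L.S, L.pos k = L.pos v
  · obtain ⟨k, hk, e⟩ := hl
    refine ⟨k, ?_⟩
    have hrk : (0 : ℝ) ≤ L.rk k := by exact_mod_cast L.rk_nonneg k
    have hyk := L.yB_mem k
    unfold power
    rw [L.depth_leaf hu, L.depth_leaf hk, L.yA_spine hv]
    have h1 : 1 ≤ L.yB k - L.pos v * L.g := by rw [L.yB_leaf hk, e]; linarith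
    rw [e] at hyk
    have h2 : 1 * (L.g - L.K) ≤ (L.yB k - L.pos v * L.g) * (L.yA u - L.yB k) :=
      mul_le_mul h1 (by linarith) (by nlinarith) (by linarith)
    nlinarith
  · refine ⟨v, ?_⟩
    unfold power
    have h1 : L.depth v = L.K ^ 2 := by unfold depth; rw [if_pos hv, if_neg hl]
    rw [L.depth_leaf hu, h1, L.yA_spine hv, L.yB_spine hv]
    have h2 : L.K * (L.g - L.K) ≤ L.K * (L.yA u - (L.pos v * L.g + L.K)) :=
      mul_le_mul_of_nonneg_left (by linarith) (by linarith)
    have h3 : L.K * L.g = 3 * (L.K ^ 2 * L.K ^ 2) := by unfold g; ring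
    have h4 : 9 * L.K ^ 2 ≤ L.K ^ 2 * L.K ^ 2 :=
      mul_le_mul_of_nonneg_right (by nlinarith) (by positivity)
    nlinarith

/-- Non-consecutive spine vertices are separated by the spine vertex following the lower one. -/
lemma power_spine_spine_far {u v : V} (hu : u ∈ L.S) (hv : v ∈ L.S)
    (h : L.pos u + 1 < L.pos v) : ∃ w, L.power u v w ≤ 0 := by
  obtain ⟨w, hw, e⟩ := L.between u hu v hv h
  refine ⟨w, ?_⟩
  have hK := L.three_le_K v
  have hg := L.g_big v
  have h1 := L.depth_spine hu
  have h2 := L.depth_spine hv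
  have h3 := L.depth_spine hw
  have hgap := L.pos_gap w v 1 (by push_cast; omega)
  have e' : L.pos w * L.g = L.pos u * L.g + L.g := by rw [e]; push_cast; ring
  have hK2 : 0 ≤ L.K ^ 2 := by positivity
  have hdiff : L.K ≤ L.g := by nlinarith
  unfold power
  rw [L.yA_spine hu, L.yA_spine hv, L.yB_spine hw]
  push_cast at hgap
  have h4 : (L.depth u + L.depth w) * (L.depth v + L.depth w) ≤
    (8 * L.K ^ 2) * (8 * L.K ^ 2) := by
    apply mul_le_mul <;> linarith
  have h5 : (L.g + L.K) * (L.g - L.K) ≤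
      (L.pos w * L.g + L.K - L.pos u * L.g) * (L.pos v * L.g - (L.pos w * L.g + L.K)) := by
    apply mul_le_mul <;> linarith
  have h6 : (9 * L.K ^ 2) * (9 * L.K ^ 2) ≤ L.g * L.g := mul_le_mul hg hg (by positivity) (by linarith)
  have h7 : 9 * L.K ^ 2 ≤ L.K ^ 2 * L.K ^ 2 :=
      mul_le_mul_of_nonneg_right (by nlinarith) (by positivity)
  nlinarith

/-- Adjacency is the absence of a witness, for the left points. -/
theorem adj_iff (u v : V) (huv : u ≠ v) : G.Adj u v ↔ ∀ w, 0 < L.power u v w := by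
  by_cases hu : u ∈ L.S <;> by_cases hv : v ∈ L.S
  · rw [L.spine_adj u hu v hv]
    constructor
    · rintro (h | h) w
      · exact L.power_spine_spine hu hv h w
      · rw [power_comm]; exact L.power_spine_spine hv hu h w
    · intro h
      have hne : L.pos u ≠ L.pos v := fun e => huv (L.spine_inj u hu v hv e)
      by_contra hc
      rcases lt_or_gt_of_ne hne with hlt | hlt
      · obtain ⟨w, hw⟩ := L.power_spine_spine_far hu hv (by omega)
        exact (h w).not_ge hw
      · obtain ⟨w, hw⟩ := L.power_spine_spine_far hv hu (by omega)
        rw [power_comm] at hw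
        exact (h w).not_ge hw
  · rw [L.spine_leaf u hu v hv]
    constructor
    · intro e w
      rw [power_comm]; exact L.power_leaf_spine hv hu e.symm w
    · intro h
      by_contra hne
      rcases lt_or_gt_of_ne hne with hlt | hlt
      · obtain ⟨w, hw⟩ := L.power_spine_leaf_lt hv hu hlt
        rw [power_comm] at hw
        exact (h w).not_ge hw
      · have hw := L.power_leaf_spine_lt hv hu hlt
        rw [power_comm] at hw
        exact (h v).not_ge hw
  · rw [G.adj_comm, L.spine_leaf v hv u hu]
    constructor
    · intro e w
      exact L.power_leaf_spine hu hv e.symm w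
    · intro h
      by_contra hne
      rcases lt_or_gt_of_ne hne with hlt | hlt
      · obtain ⟨w, hw⟩ := L.power_spine_leaf_lt hu hv hlt
        exact (h w).not_ge hw
      · exact (h u).not_ge (L.power_leaf_spine_lt hu hv hlt)
  · refine iff_of_false (L.leaf_leaf u hu v hv) fun h => ?_
    have hr : L.rk u ≠ L.rk v := fun e => huv (L.rk_inj e)
    rcases lt_or_ge (L.pos u) (L.pos v) with h1 | h1
    · exact (h u).not_ge (L.power_leaf_leaf hu hv (.inl h1))
    rcases lt_or_eq_of_le h1 with h1 | h1
    · have := L.power_leaf_leaf hv hu (.inl h1)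
      rw [power_comm] at this
      exact (h v).not_ge this
    rcases lt_or_gt_of_ne hr with h2 | h2
    · exact (h u).not_ge (L.power_leaf_leaf hu hv (.inr ⟨h1.symm, h2⟩))
    · have := L.power_leaf_leaf hv hu (.inr ⟨h1, h2⟩)
      rw [power_comm] at this
      exact (h v).not_ge this

/-- The same equivalence for the right points, obtained from `adj_iff` for the reflected layout. -/
theorem adj_iff' (u v : V) (huv : u ≠ v) : G.Adj u v ↔ ∀ w, 0 <
    (L.depth u + L.depth w) * (L.depth v + L.depth w) + (L.yA w - L.yB u) * (L.yA w - L.yB v) := by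
  rw [L.reflect.adj_iff u v huv]
  refine forall_congr' fun w => ?_
  simp only [power, reflect_depth, reflect_yA, reflect_yB]
  ring_nf

/-- Points of `Γ₀` are determined by their coordinates. -/
lemma eq_of_yA {u v : V} (h : L.yA u = L.yA v) (hd : L.depth u = L.depth v) : u = v := by
  have hK := L.three_le_K v
  have hg := L.g_big v
  have hu := L.yA_mem u
  have hv := L.yA_mem v
  have hpos : L.pos u = L.pos v := by
    by_contra hne
    rcases lt_or_gt_of_ne hne with hlt | hlt
    · have := L.pos_gap u v 1 (by push_cast; omega)
      push_cast at this
      nlinarith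
    · have := L.pos_gap v u 1 (by push_cast; omega)
      push_cast at this
      nlinarith
  by_cases hSu : u ∈ L.S <;> by_cases hSv : v ∈ L.S
  · exact L.spine_inj u hSu v hSv hpos
  · have := L.depth_spine hSu
    rw [L.depth_leaf hSv] at hd
    nlinarith
  · have := L.depth_spine hSv
    rw [L.depth_leaf hSu] at hd
    nlinarith
  · rw [L.yA_leaf hSu, L.yA_leaf hSv, hpos] at h
    have : (L.rk u : ℝ) = L.rk v := by linarith
    exact L.rk_inj (by exact_mod_cast this)

lemma eq_of_yB {u v : V} (h : L.yB u = L.yB v) (hd : L.depth u = L.depth v) : u = v :=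
  L.reflect.eq_of_yA (by rw [reflect_yA, reflect_yA, h]) (by rw [reflect_depth, reflect_depth, hd])

end Layout

/-! ### Every caterpillar has a layout -/

/-- A finite tree of maximum degree at most two is a path, numbered by the distance from an end. -/
theorem exists_path_numbering {W : Type} [Fintype W] (H : SimpleGraph W) (hH : H.IsTree)
    (hdeg : ∀ v, Set.ncard {u | H.Adj v u} ≤ 2) :
    ∃ p : W → ℕ, Function.Injective p ∧ (∀ u v, H.Adj u v ↔ p u + 1 = p v ∨ p v + 1 = p u) ∧
      ∀ v, ∀ n < p v, ∃ w, p w = n := by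
  classical
  have hc : H.Connected := hH.connected
  -- an end of the path
  obtain ⟨e, he⟩ : ∃ e, ∀ u v, H.Adj e u → H.Adj e v → u = v := by
    rcases subsingleton_or_nontrivial W with hs | hn
    · exact ⟨hc.nonempty.some, fun u v _ _ => Subsingleton.elim u v⟩
    · obtain ⟨e, he⟩ := hH.exists_vert_degree_one_of_nontrivial
      rw [SimpleGraph.degree_eq_one_iff_existsUnique_adj] at he
      exact ⟨e, fun u v hu hv => he.unique hu hv⟩
  have hpred : ∀ v n, H.dist e v = n + 1 → ∃ w, H.Adj w v ∧ H.dist e w = n := by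
    intro v n h
    obtain ⟨q, hq⟩ := hc.exists_walk_length_eq_dist v e
    rw [SimpleGraph.dist_comm, h] at hq
    cases q with
    | nil => simp at hq
    | @cons _ w _ hvw q =>
      rw [SimpleGraph.Walk.length_cons] at hq
      have h1 := SimpleGraph.dist_le q
      have h2 := hc.dist_triangle (u := e) (v := w) (w := v)
      rw [SimpleGraph.dist_eq_one_iff_adj.mpr hvw.symm] at h2
      rw [SimpleGraph.dist_comm] at h1
      exact ⟨w, hvw.symm, by omega⟩
  -- Each distance level holds at most one vertex: two of them would both be neighbours of the unique
  -- vertex one level below, which already has a neighbour one level further down (or is the end).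
  have hinj : ∀ n u v, H.dist e u = n → H.dist e v = n → u = v := by
    intro n
    induction n with
    | zero =>
      intro u v hu hv
      rw [hc.dist_eq_zero_iff] at hu hv
      exact hu.symm.trans hv
    | succ n ih =>
      intro u v hu hv
      obtain ⟨u', huu, hu'⟩ := hpred u n hu
      obtain ⟨v', hvv, hv'⟩ := hpred v n hv
      obtain rfl := ih u' v' hu' hv'
      rcases n with _ | n
      · obtain rfl := hc.dist_eq_zero_iff.mp hu'
        exact he u v huu hvv
      · obtain ⟨x, hx, hx'⟩ := hpred u' n hu'
        by_contra hne
        have hxu : x ≠ u := by rintro rfl; omega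
        have hxv : x ≠ v := by rintro rfl; omega
        have hsub : (({x, u, v} : Finset W) : Set W) ⊆ {y | H.Adj u' y} := by
          intro y hy
          simp only [Finset.coe_insert, Finset.coe_singleton, Set.mem_insert_iff,
            Set.mem_singleton_iff] at hy
          rcases hy with rfl | rfl | rfl
          exacts [hx.symm, huu, hvv]
        have h1 := Set.ncard_le_ncard hsub (Set.toFinite _)
        rw [Set.ncard_coe_finset, Finset.card_eq_three.mpr ⟨x, u, v, hxu, hxv, hne, rfl⟩] at h1
        have := hdeg u'
        omega
  refine ⟨fun v => H.dist e v, fun u v h => hinj _ u v rfl h.symm, fun u v => ⟨fun h => ?_, ?_⟩, ?_⟩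
  · have h1 := hc.dist_triangle (u := e) (v := u) (w := v)
    have h2 := hc.dist_triangle (u := e) (v := v) (w := u)
    rw [SimpleGraph.dist_eq_one_iff_adj.mpr h] at h1
    rw [SimpleGraph.dist_eq_one_iff_adj.mpr h.symm] at h2
    have h3 : H.dist e u ≠ H.dist e v := fun h' => h.ne (hinj _ u v rfl h'.symm)
    dsimp only
    omega
  · rintro (h | h)
    · obtain ⟨w, hw, hw'⟩ := hpred v _ h.symm
      exact hinj _ w u hw' rfl ▸ hw
    · obtain ⟨w, hw, hw'⟩ := hpred u _ h.symm
      exact (hinj _ w v hw' rfl ▸ hw).symm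
  · intro v n hn
    dsimp only at hn ⊢
    obtain ⟨k, hk⟩ : ∃ k, H.dist e v = n + k := ⟨_, (Nat.add_sub_cancel' hn.le).symm⟩
    clear hn
    induction k generalizing v with
    | zero => exact ⟨v, hk⟩
    | succ k ih =>
      obtain ⟨w, -, hw⟩ := hpred v (n + k) hk
      exact ih w hw

theorem IsCaterpillar.exists_layout {V : Type} [Fintype V] {G : SimpleGraph V}
    (hG : IsCaterpillar G) : Nonempty (Layout G) := by
  classical
  obtain ⟨hT, hne, hconn, hdeg⟩ := hG
  set S : Set V := {v | ¬ ∃! u, G.Adj v u} with hS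
  obtain ⟨p, hpinj, hpadj, hpint⟩ := exists_path_numbering (G.induce S)
    ⟨hconn, hT.isAcyclic.induce S⟩ hdeg
  have hleaf : ∀ v ∉ S, ∃! u, G.Adj v u := fun v hv => not_not.mp hv
  -- Two adjacent leaves would form a whole component, leaving no non-leaf vertex.
  have hLL : ∀ u ∉ S, ∀ v ∉ S, ¬ G.Adj u v := by
    intro u hu v hv huv
    obtain ⟨s, hs⟩ := hne
    have hreach : ∀ x y, G.Walk x y → (x = u ∨ x = v) → (y = u ∨ y = v) := by
      intro x y q
      induction q with
      | nil => exact id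
      | cons h q ih =>
        rintro (rfl | rfl)
        · exact ih (.inr ((hleaf _ hu).unique h huv))
        · exact ih (.inl ((hleaf _ hv).unique h huv.symm))
    rcases hreach u s (hT.connected u s).some (.inl rfl) with rfl | rfl
    exacts [hu hs, hv hs]
  -- The spine vertex at which `v` sits: `v` itself, or its neighbour when `v` is a leaf.
  have hnb : ∀ v, ∃ s : S, (v ∈ S → v = s) ∧ (v ∉ S → G.Adj v s) := by
    intro v
    by_cases hv : v ∈ S
    · exact ⟨⟨v, hv⟩, fun _ => rfl, fun h => (h hv).elim⟩
    · obtain ⟨u, hu, -⟩ := hleaf v hv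
      exact ⟨⟨u, by_contra fun h => hLL v hv u h hu⟩, fun h => (hv h).elim, fun _ => hu⟩
  choose c hcS hcL using hnb
  have hcS' : ∀ v (hv : v ∈ S), c v = ⟨v, hv⟩ := fun v hv => Subtype.ext (hcS v hv).symm
  refine ⟨{
    S := S
    pos := fun v => p (c v)
    rk := fun v => (Fintype.equivFin V v : ℕ)
    N := Fintype.card V
    rk_inj := fun u v h => (Fintype.equivFin V).injective (Fin.ext (Int.ofNat_inj.mp h))
    rk_nonneg := fun v => by positivity
    rk_lt := fun v => by have := (Fintype.equivFin V v).isLt; omega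
    spine_inj := ?_
    spine_adj := ?_
    spine_leaf := ?_
    leaf_leaf := hLL
    between := ?_ }⟩
  · intro u hu v hv h
    have := hpinj (Int.ofNat_inj.mp h)
    rw [hcS' u hu, hcS' v hv] at this
    exact congrArg Subtype.val this
  · intro u hu v hv
    rw [hcS' u hu, hcS' v hv]
    have := hpadj ⟨u, hu⟩ ⟨v, hv⟩
    rw [SimpleGraph.induce_adj] at this
    rw [this]
    omega
  · intro u hu v hv
    rw [hcS' u hu, Int.ofNat_inj, hpinj.eq_iff, Subtype.ext_iff]
    exact ⟨fun h => (hleaf v hv).unique h.symm (hcL v hv), fun h => by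
      have := (hcL v hv).symm
      rwa [← h] at this⟩
  · intro u hu v hv h
    obtain ⟨w, hw⟩ := hpint (c v) (p (c u) + 1) (by exact_mod_cast h)
    refine ⟨w, w.2, ?_⟩
    rw [hcS' w w.2, hw]; push_cast; rfl

/-- Any pair of isomorphic caterpillars admits a linearly separable mutual witness
Gabriel drawing (MW-[1] drawing). -/
theorem isomorphic_caterpillars_mw1 {V₀ V₁ : Type} [Fintype V₀] [Fintype V₁]
    (G₀ : SimpleGraph V₀) (G₁ : SimpleGraph V₁)
    (h₀ : IsCaterpillar G₀) (h₁ : IsCaterpillar G₁) (φ : G₀ ≃g G₁) :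
    ∃ (Γ₀ : V₀ → Plane) (Γ₁ : V₁ → Plane),
      IsMWClosedDrawing G₀ G₁ Γ₀ Γ₁ 1 ∧ LinearlySeparable Γ₀ Γ₁ := by
  obtain ⟨L⟩ := h₀.exists_layout
  have hR : ∀ p q : Plane, Rclosed p q 1 = betaClosed p q 1 := fun p q => by simp [Rclosed]
  have hpos : ∀ v, 0 < L.depth v := fun v => by linarith [L.half_le_depth v]
  refine ⟨fun v => !₂[-L.depth v, L.yA v],
    fun v => !₂[L.depth (φ.symm v), L.yB (φ.symm v)], ⟨⟨?_, ?_, ?_⟩, ?_, ?_⟩, ?_⟩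
  · intro u v h
    refine L.eq_of_yA (congrArg (fun x : Plane => x 1) h) ?_
    simpa using congrArg (fun x : Plane => x 0) h
  · intro u v h
    refine φ.symm.injective (L.eq_of_yB (congrArg (fun x : Plane => x 1) h) ?_)
    simpa using congrArg (fun x : Plane => x 0) h
  · rw [Set.disjoint_left]
    rintro _ ⟨u, rfl⟩ ⟨v, h⟩
    have h' : L.depth (φ.symm v) = -L.depth u := congrArg (fun x : Plane => x 0) h
    linarith [hpos u, hpos (φ.symm v)]
  · intro u v huv
    rw [L.adj_iff u v huv, φ.symm.surjective.forall]
    refine forall_congr' fun w => ?_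
    rw [hR, mem_gab, not_le, Layout.power]
    simp [add_comm]
  · intro u v huv
    rw [← φ.symm.map_adj_iff, L.adj_iff' _ _ (φ.symm.injective.ne huv)]
    refine forall_congr' fun w => ?_
    rw [hR, mem_gab, not_le]
    simp
    ring_nf
  · refine ⟨!₂[1, 0], 0, ?_, fun v => ?_, fun v => ?_⟩
    · intro h
      simpa using congrArg (fun x : Plane => x 0) h
    · simp [PiLp.inner_apply, hpos]
    · simp [PiLp.inner_apply, hpos]

end
end

section
/- For any two isomorphic trees T₀ and T₁, any vertex r₀ of T₀, and the image r₁ of r₀ under an isomorphism T₀ → T₁, there exists a single pair of drawings ⟨Γ₀,Γ₁⟩ that is an MW-β parallelogram drawing of ⟨(T₀,r₀),(T₁,r₁)⟩ simultaneously for every β ∈ [1,∞]. -/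
/-!
The two drawings are built together, by induction on the number of vertices, for one tree `G`
rooted at `r`: `Γ` draws the left copy and `Δ` the right copy of the tree. For every `β ≥ 1` the open
β-region contains the open disk with diameter `pq` and the closed β-region lies in the closed
strip of `p` and `q`. So it is enough that no point of one drawing lies in the closed strip of an
edge of the other, and that every non-edge `uv` of one drawing has a point `w` of the other at which
the angle `u w v` is obtuse (`mem_stripClosed_of_mem_Rclosed`, `mem_Ropen_of_inner_neg`).

The invariant `Half` records these two conditions together with: no edge is horizontal or vertical,
the root of `Γ` is further left than all other points and higher than every point of `Δ`, and every
other vertex of `Γ` is lower than some point of `Δ`. The construction treats the two drawings alike up to a point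
reflection, so the invariant is required of `(Γ, Δ)` and of `(-Δ, -Γ)`, and each step is proved once
for both.

For the step, delete `r`. Each component contains exactly one child of `r`, and by induction each
is drawn by a pair of drawings, scaled so that its two roots are at heights `1` and `-1`.

* These pairs are placed side by side at distance of order `D` (`Branches.forest`). For large `D`,
  the strip of an edge contains no point of another pair, because the edge is not vertical, and a
  non-edge between two pairs is witnessed by a root of the opposite drawing, because that root is
  extreme horizontally within its pair.
* The two new roots are put at `±(X, A)`, with `X` slightly larger than all abscissas and `A`
  very large (`Forest.half`). The strip of a segment from the new root to `u` is then almost the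
  half-plane above `u`, and the comparisons of heights in the invariant say that it
  avoids the opposite drawing exactly when `u` is a child of the new root. The new opposite root
  is outside the strip of every old edge, because that edge is not horizontal.
* A rotation by a right angle restores the invariant. The children of the roots which are leftmost
  in `Γ` and rightmost in `Δ` give the vertices `b₀` and `b₁` of the parallelogram.

All the requirements on `D` and on `A` are finitely many linear inequalities in one unknown with the
right leading coefficient, apart from the elementary comparison of the two new roots.
-/


open scoped RealInnerProductSpace ENNReal

noncomputable section

/-- A nicely oriented parallelogram `⟨a₀, b₀, a₁, b₁⟩`: it is a parallelogram whose
longer diagonal is `a₀a₁`, with no interior angle equal to `π/2`, and with the given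
coordinate ordering. -/
def NicelyOriented (a₀ b₀ a₁ b₁ : Plane) : Prop :=
  a₀ + a₁ = b₀ + b₁ ∧
  dist b₀ b₁ < dist a₀ a₁ ∧
  ⟪b₀ - a₀, b₁ - a₀⟫ ≠ 0 ∧
  a₁ 1 < b₀ 1 ∧ b₀ 1 < b₁ 1 ∧ b₁ 1 < a₀ 1 ∧
  a₀ 0 < b₀ 0 ∧ b₀ 0 < b₁ 0 ∧ b₁ 0 < a₁ 0

/-- An MW-β parallelogram drawing of a pair of rooted trees `⟨(G₀,r₀), (G₁,r₁)⟩`,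
supported by the nicely oriented parallelogram `⟨a₀, b₀, a₁, b₁⟩`. -/
def IsMWParallelogramDrawing {V₀ V₁ : Type*} [Fintype V₀] [Fintype V₁]
    (G₀ : SimpleGraph V₀) (G₁ : SimpleGraph V₁) (r₀ : V₀) (r₁ : V₁)
    (Γ₀ : V₀ → Plane) (Γ₁ : V₁ → Plane) (a₀ b₀ a₁ b₁ : Plane) (β : ℝ≥0∞) : Prop :=
  IsMWDrawing G₀ G₁ Γ₀ Γ₁ β ∧
  NicelyOriented a₀ b₀ a₁ b₁ ∧
  Set.range Γ₀ ∪ Set.range Γ₁ ⊆ convexHull ℝ {a₀, b₀, a₁, b₁} ∧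
  Γ₀ r₀ = a₀ ∧ Γ₁ r₁ = a₁ ∧
  (1 < Fintype.card V₀ →
    ∃ v₀ : V₀, G₀.Adj r₀ v₀ ∧ Γ₀ v₀ = b₀ ∧
      ∀ u : V₀, u ≠ r₀ → u ≠ v₀ → b₀ 1 < Γ₀ u 1 ∧ Γ₀ u 1 < b₁ 1) ∧
  (1 < Fintype.card V₁ →
    ∃ v₁ : V₁, G₁.Adj r₁ v₁ ∧ Γ₁ v₁ = b₁ ∧
      ∀ u : V₁, u ≠ r₁ → u ≠ v₁ → b₀ 1 < Γ₁ u 1 ∧ Γ₁ u 1 < b₁ 1) ∧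
  (∀ u v : V₀, G₀.Adj u v → Γ₀ u 0 ≠ Γ₀ v 0) ∧
  (∀ u v : V₁, G₁.Adj u v → Γ₁ u 0 ≠ Γ₁ v 0)

/-- The inner product `⟪u - w, v - w⟫`, in coordinates: negative when the angle `u w v` is
obtuse, i.e. when `w` lies in the open disk with diameter `uv`. -/
def ang (w u v : ℝ × ℝ) : ℝ := (u.1 - w.1) * (v.1 - w.1) + (u.2 - w.2) * (v.2 - w.2)

lemma ang_comm (w u v : ℝ × ℝ) : ang w u v = ang w v u := by
  simp only [ang]; ring

/-! ### Deleting the root of a tree -/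

/-- The forest left after deleting `r`. -/
abbrev delRoot {V : Type} (G : SimpleGraph V) (r : V) : SimpleGraph {u : V // u ≠ r} :=
  G.comap Subtype.val

lemma exists_child_of_walk {V : Type} {G : SimpleGraph V} {r u : V} (p : G.Walk u r) :
    ∀ hu : u ≠ r, ∃ (x : V) (hx : x ≠ r), G.Adj r x ∧
      (delRoot G r).Reachable ⟨u, hu⟩ ⟨x, hx⟩ := by
  induction p with
  | nil => intro hu; exact absurd rfl hu
  | @cons u v r h p ih =>
    intro hu
    by_cases hv : v = r
    · subst hv
      exact ⟨u, hu, h.symm, SimpleGraph.Reachable.refl _⟩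
    · obtain ⟨x, hx, hax, hr⟩ := ih hv
      refine ⟨x, hx, hax, SimpleGraph.Reachable.trans ?_ hr⟩
      apply SimpleGraph.Adj.reachable
      simpa using h

/-- By uniqueness of paths in a tree, the root has only one neighbour in each component of
the forest left after deleting it. -/
lemma child_unique {V : Type} {G : SimpleGraph V} (hG : G.IsAcyclic) {r x y : V}
    (hx : x ≠ r) (hy : y ≠ r) (hrx : G.Adj r x) (hry : G.Adj r y)
    (h : (delRoot G r).Reachable ⟨x, hx⟩ ⟨y, hy⟩) : x = y := by
  obtain ⟨p, hp⟩ := h.exists_isPath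
  let f : delRoot G r →g G := ⟨Subtype.val, id⟩
  have hq : (p.map f).IsPath := hp.map Subtype.val_injective
  have hr : r ∉ (p.map f).support := by
    rw [SimpleGraph.Walk.support_map]
    intro hmem
    obtain ⟨z, -, hz⟩ := List.mem_map.1 hmem
    exact z.2 hz
  have hpath : (SimpleGraph.Walk.cons hrx (p.map f)).IsPath := hq.cons hr
  have := hG.eq_snd_of_adj_start hpath hry (SimpleGraph.Walk.end_mem_support _)
  rw [this, SimpleGraph.Walk.snd_cons]

/-! ### The geometric invariant -/

/-- One half of the induction invariant on a pair of drawings `Γ` (left tree) and `Δ` (right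
tree, used here as witnesses) of one tree `G` rooted at `r`. The fields `edge` and `nonedge` are
the mutual witness conditions in their strongest form, with the closed strip excluded for edges
and a witness in the open disk for non-edges. The other half is the same
statement for the pair `-Δ`, `-Γ`. -/
structure Half {V : Type} (G : SimpleGraph V) (r : V) (h : ℝ) (Γ Δ : V → ℝ × ℝ) : Prop where
  edge : ∀ u v, G.Adj u v → ∀ w,
    ang (Γ u) (Δ w) (Γ v) < 0 ∨ ang (Γ v) (Δ w) (Γ u) < 0
  nonedge : ∀ u v, u ≠ v → ¬ G.Adj u v → ∃ w, ang (Δ w) (Γ u) (Γ v) < 0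
  xne : ∀ u v, G.Adj u v → (Γ u).1 ≠ (Γ v).1
  yne : ∀ u v, G.Adj u v → (Γ u).2 ≠ (Γ v).2
  rootx : ∀ w, (Γ r).1 < (Δ w).1
  rootx' : ∀ u, u ≠ r → (Γ r).1 < (Γ u).1
  height : (Γ r).2 = h
  below : ∀ w, (Δ w).2 < h
  dom : ∀ u, u ≠ r → ∃ w, (Γ u).2 < (Δ w).2

/-- Invariance under scaling, used to give all subtrees the same height. -/
lemma Half.scale {V : Type} {G : SimpleGraph V} {r : V} {h : ℝ} {Γ Δ : V → ℝ × ℝ}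
    (H : Half G r h Γ Δ) {t : ℝ} (ht : 0 < t) :
    Half G r (t * h) (fun v => t • Γ v) (fun v => t • Δ v) := by
  have key : ∀ a b c : ℝ × ℝ, ang a b c < 0 → ang (t • a) (t • b) (t • c) < 0 := by
    intro a b c habc
    have : ang (t • a) (t • b) (t • c) = t ^ 2 * ang a b c := by
      simp only [ang, Prod.smul_fst, Prod.smul_snd, smul_eq_mul]; ring
    rw [this]
    exact mul_neg_of_pos_of_neg (by positivity) habc
  refine ⟨?_, ?_, ?_, ?_, ?_, ?_, ?_, ?_, ?_⟩
  · intro u v huv w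
    exact (H.edge u v huv w).imp (key _ _ _) (key _ _ _)
  · intro u v hne huv
    obtain ⟨w, hw⟩ := H.nonedge u v hne huv
    exact ⟨w, key _ _ _ hw⟩
  · intro u v huv
    simpa [ht.ne'] using H.xne u v huv
  · intro u v huv
    simpa [ht.ne'] using H.yne u v huv
  · intro w
    simpa [ht] using H.rootx w
  · intro w hw
    simpa [ht] using H.rootx' w hw
  · simp [H.height]
  · intro w
    simpa [ht] using H.below w
  · intro w hw
    simpa [ht] using H.dom w hw

/-- One half of the data of the recursive drawings of the subtrees of `G` at the children of `r`,
all of height `1` and not yet placed relative to each other. The number `c v` names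
the subtree containing `v`, and `ρ v` is the root of that subtree. Values at `r` are junk. -/
structure Branches {V : Type} (G : SimpleGraph V) (r : V) (c : V → ℝ) (ρ : V → V)
    (P Q : V → ℝ × ℝ) : Prop where
  comp : ∀ u v, u ≠ r → v ≠ r → G.Adj u v → c u = c v
  rho_c : ∀ u, u ≠ r → c (ρ u) = c u
  rho_adj : ∀ u, u ≠ r → G.Adj r (ρ u)
  rho_eq : ∀ u v, u ≠ r → v ≠ r → c u = c v → ρ u = ρ v
  child : ∀ u, G.Adj r u → ρ u = u
  edge : ∀ u v, u ≠ r → v ≠ r → G.Adj u v → ∀ w, w ≠ r → c w = c u →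
    ang (P u) (Q w) (P v) < 0 ∨ ang (P v) (Q w) (P u) < 0
  nonedge : ∀ u v, u ≠ r → v ≠ r → u ≠ v → ¬ G.Adj u v → c u = c v →
    ∃ w, w ≠ r ∧ c w = c u ∧ ang (Q w) (P u) (P v) < 0
  xne : ∀ u v, u ≠ r → v ≠ r → G.Adj u v → (P u).1 ≠ (P v).1
  yne : ∀ u v, u ≠ r → v ≠ r → G.Adj u v → (P u).2 ≠ (P v).2
  rootx : ∀ u, u ≠ r → (P (ρ u)).1 < (Q u).1
  rootx' : ∀ u, u ≠ r → ρ u ≠ u → (P (ρ u)).1 < (P u).1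
  far : ∀ u, u ≠ r → (P u).1 < (Q (ρ u)).1
  height : ∀ u, u ≠ r → (P (ρ u)).2 = 1
  below : ∀ u, u ≠ r → (Q u).2 < 1
  dom : ∀ u, u ≠ r → ρ u ≠ u → ∃ w, w ≠ r ∧ (P u).2 < (Q w).2

/-- Both halves of the invariant hold for some pair of drawings. -/
def Drawable {V : Type} (G : SimpleGraph V) (r : V) : Prop :=
  ∃ (h : ℝ) (Γ Δ : V → ℝ × ℝ), Half G r h Γ Δ ∧ Half G r h (fun v => -Δ v) (fun v => -Γ v)

lemma Drawable.normalize {V : Type} {G : SimpleGraph V} {r : V} (H : Drawable G r) :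
    ∃ (Γ Δ : V → ℝ × ℝ), Half G r 1 Γ Δ ∧ Half G r 1 (fun v => -Δ v) (fun v => -Γ v) := by
  obtain ⟨h, Γ, Δ, h1, h2⟩ := H
  have hpos : 0 < h := by
    have e1 := h1.below r
    have e2 := h2.height
    simp only [Prod.snd_neg] at e2
    linarith
  refine ⟨fun v => h⁻¹ • Γ v, fun v => h⁻¹ • Δ v, ?_, ?_⟩
  · exact inv_mul_cancel₀ hpos.ne' ▸ h1.scale (inv_pos.2 hpos)
  · have := inv_mul_cancel₀ hpos.ne' ▸ h2.scale (inv_pos.2 hpos)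
    simpa only [smul_neg] using this

lemma exists_branches {V : Type} [Finite V] {G : SimpleGraph V} (hG : G.IsTree) (r : V)
    (IH : ∀ (W : Type) [Finite W] (G' : SimpleGraph W) (s : W), Nat.card W < Nat.card V →
      G'.IsTree → Drawable G' s) :
    ∃ (c : V → ℝ) (ρ : V → V) (P Q : V → ℝ × ℝ), Branches G r c ρ P Q ∧
      Branches G r (fun v => -c v) ρ (fun v => -Q v) (fun v => -P v) := by
  classical
  have hroot : ∀ C : (delRoot G r).ConnectedComponent, ∃ x : C, G.Adj r x.1.1 := by
    intro C
    induction C using SimpleGraph.ConnectedComponent.ind with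
    | _ u =>
    obtain ⟨p⟩ := hG.1.preconnected u.1 r
    obtain ⟨x, hx, hax, hr⟩ := exists_child_of_walk p u.2
    exact ⟨⟨⟨x, hx⟩, SimpleGraph.ConnectedComponent.sound hr.symm⟩, hax⟩
  choose rt hrt using hroot
  have hD : ∀ C : (delRoot G r).ConnectedComponent, Drawable C.toSimpleGraph (rt C) := by
    intro C
    apply IH
    · calc Nat.card C ≤ Nat.card {u : V // u ≠ r} :=
          Nat.card_le_card_of_injective _ Subtype.val_injective
        _ < Nat.card V := Finite.card_subtype_lt (x := r) (not_not.2 rfl)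
    · exact (hG.2.of_comap (Function.Embedding.subtype _)).isTree_connectedComponent C
  choose Γ Δ hΓ hΔ using fun C => (hD C).normalize
  obtain ⟨n, ⟨e⟩⟩ := Finite.exists_equiv_fin (delRoot G r).ConnectedComponent
  let mk : ∀ u, u ≠ r → (delRoot G r).ConnectedComponent := fun u hu =>
    (delRoot G r).connectedComponentMk ⟨u, hu⟩
  let c : V → ℝ := fun u => if h : u ≠ r then ((e (mk u h) : ℕ) : ℝ) else 0
  let ρ : V → V := fun u => if h : u ≠ r then (rt (mk u h)).1.1 else r
  let P : V → ℝ × ℝ := fun u => if h : u ≠ r then Γ (mk u h) ⟨⟨u, h⟩, rfl⟩ else 0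
  let Q : V → ℝ × ℝ := fun u => if h : u ≠ r then Δ (mk u h) ⟨⟨u, h⟩, rfl⟩ else 0
  have hc : ∀ (C : (delRoot G r).ConnectedComponent) (x : C), c x.1.1 = ((e C : ℕ) : ℝ) := by
    rintro C ⟨⟨u, hu⟩, hx⟩
    obtain rfl : _ = C := hx
    exact dif_pos (show u ≠ r from hu)
  have hρ : ∀ (C : (delRoot G r).ConnectedComponent) (x : C), ρ x.1.1 = (rt C).1.1 := by
    rintro C ⟨⟨u, hu⟩, hx⟩
    obtain rfl : _ = C := hx
    exact dif_pos (show u ≠ r from hu)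
  have hP : ∀ (C : (delRoot G r).ConnectedComponent) (x : C), P x.1.1 = Γ C x := by
    rintro C ⟨⟨u, hu⟩, hx⟩
    obtain rfl : _ = C := hx
    exact dif_pos (show u ≠ r from hu)
  have hQ : ∀ (C : (delRoot G r).ConnectedComponent) (x : C), Q x.1.1 = Δ C x := by
    rintro C ⟨⟨u, hu⟩, hx⟩
    obtain rfl : _ = C := hx
    exact dif_pos (show u ≠ r from hu)
  have hne : ∀ C : (delRoot G r).ConnectedComponent, ∀ x : C, x.1.1 ≠ r := fun C x => x.1.2
  have hlift : ∀ u, u ≠ r → ∃ C : (delRoot G r).ConnectedComponent, ∃ x : C, x.1.1 = u :=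
    fun u hu => ⟨mk u hu, ⟨⟨u, hu⟩, rfl⟩, rfl⟩
  have hsame : ∀ (C C' : (delRoot G r).ConnectedComponent) (x : C) (y : C'),
      c x.1.1 = c y.1.1 → C = C' := by
    intro C C' x y hxy
    rw [hc, hc] at hxy
    exact e.injective (Fin.ext (by exact_mod_cast hxy))
  have hadjC : ∀ (C C' : (delRoot G r).ConnectedComponent) (x : C) (y : C'),
      G.Adj x.1.1 y.1.1 → C = C' := by
    rintro C C' ⟨x, hx⟩ ⟨y, hy⟩ hxy
    rw [← show _ = C from hx, ← show _ = C' from hy]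
    exact SimpleGraph.ConnectedComponent.sound
      (SimpleGraph.Adj.reachable (by simpa using hxy))
  have hadj : ∀ (C : (delRoot G r).ConnectedComponent) (x y : C),
      G.Adj x.1.1 y.1.1 ↔ C.toSimpleGraph.Adj x y := by
    intro C x y
    simp [SimpleGraph.ConnectedComponent.toSimpleGraph]
  have hchild : ∀ (C : (delRoot G r).ConnectedComponent) (x : C), G.Adj r x.1.1 → x = rt C := by
    intro C x hx
    have := child_unique hG.2 x.1.2 (rt C).1.2 hx (hrt C)
      (SimpleGraph.ConnectedComponent.exact (x.2.trans (rt C).2.symm))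
    exact Subtype.ext (Subtype.ext this)
  -- Both halves follow from one statement about arbitrary local drawings.
  have main : ∀ (c' : V → ℝ) (P' Q' : V → ℝ × ℝ)
      (A B : ∀ C : (delRoot G r).ConnectedComponent, C → ℝ × ℝ),
      (∀ u v, c' u = c' v ↔ c u = c v) → (∀ (C : (delRoot G r).ConnectedComponent) (x : C), P' x.1.1 = A C x) →
      (∀ (C : (delRoot G r).ConnectedComponent) (x : C), Q' x.1.1 = B C x) → (∀ C, Half C.toSimpleGraph (rt C) 1 (A C) (B C)) →
      (∀ (C : (delRoot G r).ConnectedComponent) (x : C), (A C x).1 < (B C (rt C)).1) → Branches G r c' ρ P' Q' := by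
    intro c' P' Q' A B hc' hP' hQ' hAB hfar
    refine ⟨?_, ?_, ?_, ?_, ?_, ?_, ?_, ?_, ?_, ?_, ?_, ?_, ?_, ?_, ?_⟩
    · intro u v hu hv huv
      obtain ⟨C, x, rfl⟩ := hlift u hu
      obtain ⟨C', y, rfl⟩ := hlift v hv
      obtain rfl := hadjC C C' x y huv
      rw [hc', hc, hc]
    · intro u hu
      obtain ⟨C, x, rfl⟩ := hlift u hu
      rw [hc', hρ C x, hc, hc]
    · intro u hu
      obtain ⟨C, x, rfl⟩ := hlift u hu
      rw [hρ C x]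
      exact hrt C
    · intro u v hu hv huv
      obtain ⟨C, x, rfl⟩ := hlift u hu
      obtain ⟨C', y, rfl⟩ := hlift v hv
      obtain rfl := hsame C C' x y ((hc' _ _).1 huv)
      rw [hρ C x, hρ C y]
    · intro u hu
      obtain ⟨C, x, rfl⟩ := hlift u hu.ne'
      rw [hρ C x, ← hchild C x hu]
    · intro u v hu hv huv w hw hwu
      obtain ⟨C, x, rfl⟩ := hlift u hu
      obtain ⟨C', y, rfl⟩ := hlift v hv
      obtain rfl := hadjC C C' x y huv
      obtain ⟨C', z, rfl⟩ := hlift w hw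
      obtain rfl := hsame _ _ z x ((hc' _ _).1 hwu)
      rw [hP', hP', hQ']
      exact (hAB _).edge x y ((hadj _ x y).1 huv) z
    · intro u v hu hv hne' huv huv'
      obtain ⟨C, x, rfl⟩ := hlift u hu
      obtain ⟨C', y, rfl⟩ := hlift v hv
      obtain rfl := hsame C C' x y ((hc' _ _).1 huv')
      obtain ⟨w, hw⟩ := (hAB C).nonedge x y (fun h => hne' (by rw [h])) (fun h => huv ((hadj _ x y).2 h))
      refine ⟨w.1.1, hne C w, ?_, ?_⟩
      · rw [hc', hc, hc]
      · rwa [hP', hP', hQ']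
    · intro u v hu hv huv
      obtain ⟨C, x, rfl⟩ := hlift u hu
      obtain ⟨C', y, rfl⟩ := hlift v hv
      obtain rfl := hadjC C C' x y huv
      rw [hP', hP']
      exact (hAB _).xne x y ((hadj _ x y).1 huv)
    · intro u v hu hv huv
      obtain ⟨C, x, rfl⟩ := hlift u hu
      obtain ⟨C', y, rfl⟩ := hlift v hv
      obtain rfl := hadjC C C' x y huv
      rw [hP', hP']
      exact (hAB _).yne x y ((hadj _ x y).1 huv)
    · intro u hu
      obtain ⟨C, x, rfl⟩ := hlift u hu
      rw [hρ C x, hP', hQ']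
      exact (hAB C).rootx x
    · intro u hu hu'
      obtain ⟨C, x, rfl⟩ := hlift u hu
      rw [hρ C x] at hu' ⊢
      rw [hP', hP']
      exact (hAB C).rootx' x (fun h => hu' (by rw [h]))
    · intro u hu
      obtain ⟨C, x, rfl⟩ := hlift u hu
      rw [hρ C x, hP', hQ']
      exact hfar C x
    · intro u hu
      obtain ⟨C, x, rfl⟩ := hlift u hu
      rw [hρ C x, hP']
      exact (hAB C).height
    · intro u hu
      obtain ⟨C, x, rfl⟩ := hlift u hu
      rw [hQ']
      exact (hAB C).below x
    · intro u hu hu'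
      obtain ⟨C, x, rfl⟩ := hlift u hu
      rw [hρ C x] at hu'
      obtain ⟨w, hw⟩ := (hAB C).dom x (fun h => hu' (by rw [h]))
      refine ⟨w.1.1, hne C w, ?_⟩
      rwa [hP', hQ']
  refine ⟨c, ρ, P, Q, main c P Q Γ Δ (fun _ _ => Iff.rfl) hP hQ hΓ ?_,
    main _ _ _ (fun C x => -Δ C x) (fun C x => -Γ C x) (fun _ _ => neg_inj) ?_ ?_ hΔ ?_⟩
  · intro C x
    simpa using (hΔ C).rootx x
  · intro C x
    rw [hQ]
  · intro C x
    rw [hP]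
  · intro C x
    simpa using (hΓ C).rootx x

/-! ### Placing the subtrees side by side -/

/-- One half of the properties of the drawing of all the subtrees side by side, centred so that
the leftmost point has abscissa `-K`; nothing is said about the root `r`. -/
structure Forest {V : Type} (G : SimpleGraph V) (r : V) (K : ℝ) (Γ Δ : V → ℝ × ℝ) : Prop where
  edge : ∀ u v, u ≠ r → v ≠ r → G.Adj u v → ∀ w, w ≠ r →
    ang (Γ u) (Δ w) (Γ v) < 0 ∨ ang (Γ v) (Δ w) (Γ u) < 0
  nonedge : ∀ u v, u ≠ r → v ≠ r → u ≠ v → ¬ G.Adj u v →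
    ∃ w, w ≠ r ∧ ang (Δ w) (Γ u) (Γ v) < 0
  xne : ∀ u v, u ≠ r → v ≠ r → G.Adj u v → (Γ u).1 ≠ (Γ v).1
  yne : ∀ u v, u ≠ r → v ≠ r → G.Adj u v → (Γ u).2 ≠ (Γ v).2
  top : ∀ u, G.Adj r u → (Γ u).2 = 1
  below : ∀ w, w ≠ r → (Δ w).2 < 1
  dom : ∀ u, u ≠ r → ¬ G.Adj r u → ∃ w, w ≠ r ∧ (Γ u).2 < (Δ w).2
  lo : ∀ w, w ≠ r → -K < (Δ w).1
  first : ∃ b, G.Adj r b ∧ (Γ b).1 = -K ∧ ∀ u, u ≠ r → u ≠ b → -K < (Γ u).1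

lemma eventually_neg {a : ℝ} (b : ℝ) (ha : a < 0) : ∀ᶠ D : ℝ in Filter.atTop, a * D + b < 0 := by
  filter_upwards [Filter.eventually_gt_atTop (-b / a)] with D hD
  have := (div_lt_iff_of_neg ha).1 hD
  linarith

/-- The translate by `D * c v - s` to the right. -/
def place {V : Type} (c : V → ℝ) (D s : ℝ) (P : V → ℝ × ℝ) (v : V) : ℝ × ℝ :=
  ((P v).1 + D * c v - s, (P v).2)

lemma neg_place {V : Type} (c : V → ℝ) (D s : ℝ) (P : V → ℝ × ℝ) (v : V) :
    -place c D s P v = place (fun v => -c v) D (-s) (fun v => -P v) v := by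
  simp only [place, Prod.ext_iff, Prod.fst_neg, Prod.snd_neg, and_true]
  ring

lemma Branches.forest {V : Type} [Finite V] {G : SimpleGraph V} {r : V} {c : V → ℝ} {ρ : V → V}
    {P Q : V → ℝ × ℝ} (L : Branches G r c ρ P Q) {b : V} (hb : G.Adj r b)
    (hmin : ∀ u, u ≠ r → c b ≤ c u) :
    ∀ᶠ D : ℝ in Filter.atTop, ∀ s : ℝ,
      Forest G r (s - (P b).1 - D * c b) (place c D s P) (place c D s Q) := by
  have hρne : ∀ u, u ≠ r → ρ u ≠ r := fun u hu => (L.rho_adj u hu).ne'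
  have hρb : ρ b = b := L.child b hb
  -- Edges: witnesses of the same subtree move along with the edge, all others move out of the
  -- strip since the edge is not vertical.
  have hedge : ∀ᶠ D : ℝ in Filter.atTop, ∀ u v w, u ≠ r → v ≠ r → w ≠ r → G.Adj u v →
      ang (place c D 0 P u) (place c D 0 Q w) (place c D 0 P v) < 0 ∨
      ang (place c D 0 P v) (place c D 0 Q w) (place c D 0 P u) < 0 := by
    refine Filter.eventually_all.2 fun u => Filter.eventually_all.2 fun v =>
      Filter.eventually_all.2 fun w => ?_
    simp only [Filter.eventually_imp_distrib_left]
    intro hu hv hw huv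
    have hcuv := L.comp u v hu hv huv
    by_cases hcw : c w = c u
    · refine Filter.Eventually.of_forall fun D => ?_
      have := L.edge u v hu hv huv w hw hcw
      simp only [ang, place, ← hcuv, hcw] at this ⊢
      ring_nf at this ⊢
      exact this
    · have hx := L.xne u v hu hv huv
      have hprod : (c w - c u) * ((P v).1 - (P u).1) ≠ 0 :=
        mul_ne_zero (sub_ne_zero.2 hcw) (sub_ne_zero.2 hx.symm)
      rcases lt_or_gt_of_ne hprod with h | h
      · filter_upwards [eventually_neg (ang (P u) (Q w) (P v)) h] with D hD
        left
        simp only [ang, place, ← hcuv] at hD ⊢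
        linarith
      · filter_upwards [eventually_neg (ang (P v) (Q w) (P u)) (neg_neg_of_pos h)] with D hD
        right
        simp only [ang, place, ← hcuv] at hD ⊢
        linarith
  -- Non-edges between different subtrees are witnessed by the root of the opposite subtree
  -- belonging to the one further left.
  have hfar : ∀ᶠ D : ℝ in Filter.atTop, ∀ u v, u ≠ r → v ≠ r → c u < c v →
      ang (place c D 0 Q (ρ u)) (place c D 0 P u) (place c D 0 P v) < 0 := by
    refine Filter.eventually_all.2 fun u => Filter.eventually_all.2 fun v => ?_
    simp only [Filter.eventually_imp_distrib_left]
    intro hu hv huv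
    have h : ((P u).1 - (Q (ρ u)).1) * (c v - c u) < 0 :=
      mul_neg_of_neg_of_pos (sub_neg.2 (L.far u hu)) (sub_pos.2 huv)
    filter_upwards [eventually_neg (ang (Q (ρ u)) (P u) (P v)) h] with D hD
    simp only [ang, place, L.rho_c u hu] at hD ⊢
    linarith
  have hyP : ∀ᶠ D : ℝ in Filter.atTop, ∀ u, c b < c u → (P b).1 + D * c b < (P u).1 + D * c u := by
    refine Filter.eventually_all.2 fun u => ?_
    simp only [Filter.eventually_imp_distrib_left]
    intro h
    filter_upwards [eventually_neg ((P b).1 - (P u).1) (sub_neg.2 h)] with D hD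
    linarith
  have hyQ : ∀ᶠ D : ℝ in Filter.atTop, ∀ u, c b < c u → (P b).1 + D * c b < (Q u).1 + D * c u := by
    refine Filter.eventually_all.2 fun u => ?_
    simp only [Filter.eventually_imp_distrib_left]
    intro h
    filter_upwards [eventually_neg ((P b).1 - (Q u).1) (sub_neg.2 h)] with D hD
    linarith
  have hxne : ∀ u v, u ≠ r → v ≠ r → G.Adj u v → ∀ D s : ℝ,
      (place c D s P u).1 ≠ (place c D s P v).1 := by
    intro u v hu hv huv D s
    have := L.xne u v hu hv huv
    simp only [place, L.comp u v hu hv huv]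
    simpa using this
  have hang : ∀ (D s : ℝ) (A B C : V → ℝ × ℝ) (u v w : V),
      ang (place c D s A u) (place c D s B v) (place c D s C w) =
        ang (place c D 0 A u) (place c D 0 B v) (place c D 0 C w) := by
    intro D s A B C u v w
    simp only [ang, place]; ring
  filter_upwards [hedge, hfar, hyP, hyQ] with D h1 h2 h3 h4 s
  refine ⟨?_, ?_, fun u v hu hv huv => hxne u v hu hv huv D s, L.yne, ?_, L.below, ?_, ?_, ?_⟩
  · intro u v hu hv huv w hw
    rw [hang D s P Q P u w v, hang D s P Q P v w u]
    exact h1 u v w hu hv hw huv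
  · intro u v hu hv hne huv
    rcases lt_trichotomy (c u) (c v) with h | h | h
    · exact ⟨ρ u, hρne u hu, by rw [hang]; exact h2 u v hu hv h⟩
    · obtain ⟨w, hw, hcw, hlt⟩ := L.nonedge u v hu hv hne huv h
      refine ⟨w, hw, ?_⟩
      simp only [ang, place, ← h, hcw] at hlt ⊢
      ring_nf at hlt ⊢
      exact hlt
    · exact ⟨ρ v, hρne v hv, by rw [hang, ang_comm]; exact h2 v u hv hu h⟩
  · intro u hu
    have := L.height u hu.ne'
    rwa [L.child u hu] at this
  · intro u hu hru
    exact L.dom u hu (fun h => hru (h ▸ L.rho_adj u hu))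
  · intro w hw
    have : (P b).1 + D * c b < (Q w).1 + D * c w := by
      rcases (hmin w hw).lt_or_eq with h | h
      · exact h4 w h
      · have hrx := L.rootx w hw
        rw [← L.rho_eq b w hb.ne' hw h, hρb] at hrx
        rw [h]
        linarith
    simp only [place]
    linarith
  · refine ⟨b, hb, ?_, ?_⟩
    · simp only [place]; ring
    · intro u hu hub
      have : (P b).1 + D * c b < (P u).1 + D * c u := by
        rcases (hmin u hu).lt_or_eq with h | h
        · exact h3 u h
        · have he := L.rho_eq b u hb.ne' hu h
          rw [hρb] at he
          have hrx := L.rootx' u hu (by rw [← he]; exact hub.symm)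
          rw [← he] at hrx
          rw [h]
          linarith
      simp only [place]
      linarith

lemma exists_forest {V : Type} [Finite V] {G : SimpleGraph V} (hG : G.IsTree) (r : V)
    (hV : ∃ v, v ≠ r)
    (IH : ∀ (W : Type) [Finite W] (G' : SimpleGraph W) (s : W), Nat.card W < Nat.card V →
      G'.IsTree → Drawable G' s) :
    ∃ (K : ℝ) (Γ Δ : V → ℝ × ℝ), 0 < K ∧ Forest G r K Γ Δ ∧
      Forest G r K (fun v => -Δ v) (fun v => -Γ v) := by
  obtain ⟨c, ρ, P, Q, L, L'⟩ := exists_branches hG r IH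
  have : Nonempty {v // v ≠ r} := let ⟨v, hv⟩ := hV; ⟨⟨v, hv⟩⟩
  obtain ⟨⟨m, hm⟩, hmin⟩ := Finite.exists_min (fun v : {v // v ≠ r} => c v)
  obtain ⟨⟨m', hm'⟩, hmax⟩ := Finite.exists_max (fun v : {v // v ≠ r} => c v)
  have hb := L.rho_adj m hm
  have hb' := L.rho_adj m' hm'
  have e1 := L.forest hb (fun u hu => by rw [L.rho_c m hm]; exact hmin ⟨u, hu⟩)
  have e2 := L'.forest hb' (fun u hu => by
    rw [L.rho_c m' hm']; exact neg_le_neg (hmax ⟨u, hu⟩))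
  obtain ⟨D, h1, h2⟩ := (e1.and e2).exists
  set b := ρ m
  set b' := ρ m'
  -- The midpoint of the leftmost and the rightmost point is moved to abscissa `0`.
  set s := ((P b).1 + D * c b + (Q b').1 + D * c b') / 2 with hs
  have F1 := h1 s
  have F2 := h2 (-s)
  have hK : -s - (-Q b').1 - D * -c b' = s - (P b).1 - D * c b := by
    rw [hs, Prod.fst_neg]; ring
  rw [hK] at F2
  refine ⟨_, _, _, ?_, F1, ?_⟩
  · have := F1.lo b' hb'.ne'
    simp only [place] at this
    simp only [Prod.fst_neg] at hK
    linarith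
  · convert F2 using 2 with v
    · exact neg_place c D s Q v
    · exact neg_place c D s P _

/-! ### Adding the roots far away -/

/-- The drawing obtained by turning the plane by a right angle and putting the root `r` at
`(-A, X)`. -/
def grow {V : Type} (r : V) (A X : ℝ) (Γ : V → ℝ × ℝ) (v : V) : ℝ × ℝ :=
  open Classical in if v = r then (-A, X) else (-(Γ v).2, (Γ v).1)

lemma grow_root {V : Type} (r : V) (A X : ℝ) (Γ : V → ℝ × ℝ) : grow r A X Γ r = (-A, X) :=
  if_pos rfl

lemma grow_ne {V : Type} {r : V} (A X : ℝ) (Γ : V → ℝ × ℝ) {v : V} (hv : v ≠ r) :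
    grow r A X Γ v = (-(Γ v).2, (Γ v).1) :=
  if_neg hv

lemma neg_grow_root {V : Type} (r : V) (A X : ℝ) (Γ : V → ℝ × ℝ) :
    -grow r A X (fun v => -Γ v) r = (A, -X) := by
  simp [grow_root]

lemma neg_grow_ne {V : Type} {r : V} (A X : ℝ) (Γ : V → ℝ × ℝ) {v : V} (hv : v ≠ r) :
    -grow r A X (fun v => -Γ v) v = (-(Γ v).2, (Γ v).1) := by
  simp [grow_ne A X _ hv]

lemma Forest.lo' {V : Type} {G : SimpleGraph V} {r : V} {K : ℝ} {Γ Δ : V → ℝ × ℝ}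
    (F : Forest G r K Γ Δ) (u : V) (hu : u ≠ r) : -K ≤ (Γ u).1 := by
  obtain ⟨b, -, hb, h⟩ := F.first
  by_cases hub : u = b
  · rw [hub, hb]
  · exact (h u hu hub).le

lemma Forest.snd_le {V : Type} {G : SimpleGraph V} {r : V} {K : ℝ} {Γ Δ : V → ℝ × ℝ}
    (F : Forest G r K Γ Δ) (u : V) (hu : u ≠ r) : (Γ u).2 ≤ 1 := by
  by_cases h : G.Adj r u
  · exact (F.top u h).le
  · obtain ⟨w, hw, hlt⟩ := F.dom u hu h
    linarith [F.below w hw]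

lemma Forest.half {V : Type} [Finite V] {G : SimpleGraph V} {r : V} {K : ℝ} {Γ Δ : V → ℝ × ℝ}
    (hK : 0 < K) (F : Forest G r K Γ Δ) (F' : Forest G r K (fun v => -Δ v) (fun v => -Γ v)) :
    ∀ᶠ A : ℝ in Filter.atTop, Half G r (K + 1) (grow r A (K + 1) Γ)
      (fun v => -grow r A (K + 1) (fun v => -Δ v) v) := by
  have hlt : ∀ u, u ≠ r → (Γ u).1 < K := fun u hu => by
    have := F'.lo u hu
    simp only [Prod.fst_neg] at this
    linarith
  have hle : ∀ u, u ≠ r → (Δ u).1 ≤ K := fun u hu => by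
    have := F'.lo' u hu
    simp only [Prod.fst_neg] at this
    linarith
  -- The opposite root avoids the strip of every edge, since no edge is horizontal.
  have h1 : ∀ᶠ A : ℝ in Filter.atTop, ∀ u v, u ≠ r → v ≠ r → G.Adj u v →
      ang (-(Γ u).2, (Γ u).1) (A, -(K + 1)) (-(Γ v).2, (Γ v).1) < 0 ∨
      ang (-(Γ v).2, (Γ v).1) (A, -(K + 1)) (-(Γ u).2, (Γ u).1) < 0 := by
    refine Filter.eventually_all.2 fun u => Filter.eventually_all.2 fun v => ?_
    simp only [Filter.eventually_imp_distrib_left]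
    intro hu hv huv
    rcases lt_or_gt_of_ne (F.yne u v hu hv huv) with h | h
    · filter_upwards [eventually_neg
        (ang (-(Γ u).2, (Γ u).1) (0, -(K + 1)) (-(Γ v).2, (Γ v).1)) (sub_neg.2 h)] with A hA
      left
      simp only [ang] at hA ⊢
      linarith
    · filter_upwards [eventually_neg
        (ang (-(Γ v).2, (Γ v).1) (0, -(K + 1)) (-(Γ u).2, (Γ u).1)) (sub_neg.2 h)] with A hA
      right
      simp only [ang] at hA ⊢
      linarith
  -- All witnesses are lower than the children of the root.
  have h2 : ∀ᶠ A : ℝ in Filter.atTop, ∀ u w, G.Adj r u → w ≠ r →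
      ang (-(Γ u).2, (Γ u).1) (-(Δ w).2, (Δ w).1) (-A, K + 1) < 0 := by
    refine Filter.eventually_all.2 fun u => Filter.eventually_all.2 fun w => ?_
    simp only [Filter.eventually_imp_distrib_left]
    intro hu hw
    have h : (Δ w).2 - (Γ u).2 < 0 := by linarith [F.top u hu, F.below w hw]
    filter_upwards [eventually_neg
      (ang (-(Γ u).2, (Γ u).1) (-(Δ w).2, (Δ w).1) (0, K + 1)) h] with A hA
    simp only [ang] at hA ⊢
    linarith
  -- Every other vertex is lower than some witness.
  have h3 : ∀ᶠ A : ℝ in Filter.atTop, ∀ u, u ≠ r → ¬ G.Adj r u → ∃ w, w ≠ r ∧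
      ang (-(Δ w).2, (Δ w).1) (-A, K + 1) (-(Γ u).2, (Γ u).1) < 0 := by
    refine Filter.eventually_all.2 fun u => ?_
    simp only [Filter.eventually_imp_distrib_left]
    intro hu hru
    obtain ⟨w, hw, hlt⟩ := F.dom u hu hru
    filter_upwards [eventually_neg
      (ang (-(Δ w).2, (Δ w).1) (0, K + 1) (-(Γ u).2, (Γ u).1)) (sub_neg.2 hlt)] with A hA
    refine ⟨w, hw, ?_⟩
    simp only [ang] at hA ⊢
    linarith
  filter_upwards [h1, h2, h3, Filter.eventually_gt_atTop 1] with A h1 h2 h3 hA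
  have hchild : ∀ u, G.Adj r u → ∀ w,
      ang (grow r A (K + 1) Γ u) (-grow r A (K + 1) (fun v => -Δ v) w)
        (grow r A (K + 1) Γ r) < 0 := by
    intro u hu w
    rw [grow_ne _ _ _ hu.ne', grow_root]
    by_cases hw : w = r
    · rw [hw, neg_grow_root]
      have e1 := F.lo' u hu.ne'
      have e2 := hlt u hu.ne'
      simp only [ang, F.top u hu]
      nlinarith
    · rw [neg_grow_ne _ _ _ hw]
      exact h2 u w hu hw
  have hroot : ∀ u, u ≠ r → ¬ G.Adj r u → ∃ w,
      ang (-grow r A (K + 1) (fun v => -Δ v) w) (grow r A (K + 1) Γ r)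
        (grow r A (K + 1) Γ u) < 0 := by
    intro u hu hru
    obtain ⟨w, hw, h⟩ := h3 u hu hru
    refine ⟨w, ?_⟩
    rwa [neg_grow_ne _ _ _ hw, grow_ne _ _ _ hu, grow_root]
  have hxne : ∀ u, G.Adj r u → (grow r A (K + 1) Γ r).1 ≠ (grow r A (K + 1) Γ u).1 := by
    intro u hu
    rw [grow_ne _ _ _ hu.ne', grow_root]
    simp only [F.top u hu]
    linarith
  have hyne : ∀ u, G.Adj r u → (grow r A (K + 1) Γ r).2 ≠ (grow r A (K + 1) Γ u).2 := by
    intro u hu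
    rw [grow_ne _ _ _ hu.ne', grow_root]
    have := hlt u hu.ne'
    simp only
    linarith
  refine ⟨?_, ?_, ?_, ?_, ?_, ?_, ?_, ?_, ?_⟩
  · intro u v huv w
    by_cases hu : u = r
    · subst hu
      exact Or.inr (hchild v huv w)
    by_cases hv : v = r
    · subst hv
      exact Or.inl (hchild u huv.symm w)
    rw [grow_ne _ _ _ hu, grow_ne _ _ _ hv]
    by_cases hw : w = r
    · rw [hw, neg_grow_root]
      exact h1 u v hu hv huv
    · rw [neg_grow_ne _ _ _ hw]
      have := F.edge u v hu hv huv w hw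
      simp only [ang] at this ⊢
      ring_nf at this ⊢
      exact this
  · intro u v hne huv
    by_cases hu : u = r
    · subst hu
      exact hroot v (Ne.symm hne) huv
    by_cases hv : v = r
    · subst hv
      obtain ⟨w, hw⟩ := hroot u hne (fun h => huv h.symm)
      exact ⟨w, by rwa [ang_comm]⟩
    obtain ⟨w, hw, h⟩ := F.nonedge u v hu hv hne huv
    refine ⟨w, ?_⟩
    rw [grow_ne _ _ _ hu, grow_ne _ _ _ hv, neg_grow_ne _ _ _ hw]
    simp only [ang] at h ⊢
    linarith
  · intro u v huv
    by_cases hu : u = r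
    · subst hu
      exact hxne v huv
    by_cases hv : v = r
    · subst hv
      exact (hxne u huv.symm).symm
    rw [grow_ne _ _ _ hu, grow_ne _ _ _ hv]
    exact fun h => F.yne u v hu hv huv (neg_injective h)
  · intro u v huv
    by_cases hu : u = r
    · subst hu
      exact hyne v huv
    by_cases hv : v = r
    · subst hv
      exact (hyne u huv.symm).symm
    rw [grow_ne _ _ _ hu, grow_ne _ _ _ hv]
    exact F.xne u v hu hv huv
  · intro w
    rw [grow_root]
    by_cases hw : w = r
    · rw [hw, neg_grow_root]
      simp only
      linarith
    · rw [neg_grow_ne _ _ _ hw]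
      have := F.below w hw
      simp only
      linarith
  · intro u hu
    rw [grow_root, grow_ne _ _ _ hu]
    have := F.snd_le u hu
    simp only
    linarith
  · rw [grow_root]
  · intro w
    by_cases hw : w = r
    · rw [hw, neg_grow_root]
      simp only
      linarith
    · rw [neg_grow_ne _ _ _ hw]
      have := hle w hw
      simp only
      linarith
  · intro u hu
    obtain ⟨b, hrb, hb, -⟩ := F'.first
    refine ⟨b, ?_⟩
    rw [grow_ne _ _ _ hu, neg_grow_ne _ _ _ hrb.ne']
    have := hlt u hu
    simp only [Prod.fst_neg] at hb ⊢
    linarith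

/-- A pair of drawings satisfying both halves of the invariant, whose bounding parallelogram is
given by `a₀ = (-A, X)`, `b₀ = (-1, -K)` and their opposites `a₁`, `b₁`. For a one-vertex tree
nothing is drawn at `b₀` and `b₁`. -/
structure Final {V : Type} (G : SimpleGraph V) (r : V) (X A K : ℝ) (Γ Δ : V → ℝ × ℝ) :
    Prop where
  left : Half G r X Γ Δ
  right : Half G r X (fun v => -Δ v) (fun v => -Γ v)
  K_pos : 0 < K
  K_lt : K < X
  A_gt : 1 < A
  rootΓ : Γ r = (-A, X)
  rootΔ : Δ r = (A, -X)
  box : ∀ u, u ≠ r → |(Γ u).1| ≤ 1 ∧ |(Γ u).2| ≤ K ∧ |(Δ u).1| ≤ 1 ∧ |(Δ u).2| ≤ K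
  first : ∀ u, u ≠ r → ∃ b, G.Adj r b ∧ Γ b = (-1, -K) ∧
    ∀ v, v ≠ r → v ≠ b → -K < (Γ v).2 ∧ (Γ v).2 < K
  last : ∀ u, u ≠ r → ∃ b, G.Adj r b ∧ Δ b = (1, K) ∧
    ∀ v, v ≠ r → v ≠ b → -K < (Δ v).2 ∧ (Δ v).2 < K

lemma final_of_forest {V : Type} [Finite V] {G : SimpleGraph V} {r : V} {K : ℝ}
    {Γ Δ : V → ℝ × ℝ} (hK : 0 < K) (F : Forest G r K Γ Δ)
    (F' : Forest G r K (fun v => -Δ v) (fun v => -Γ v)) :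
    ∃ X A K Γ Δ, Final G r X A K Γ Δ := by
  have F'' : Forest G r K (fun v => - -Γ v) (fun v => - -Δ v) := by simpa only [neg_neg] using F
  obtain ⟨A, ⟨h1, h2⟩, hA⟩ := (((F.half hK F').and (F'.half hK F'')).and
    (Filter.eventually_gt_atTop 1)).exists
  refine ⟨K + 1, A, K, grow r A (K + 1) Γ, fun v => -grow r A (K + 1) (fun v => -Δ v) v,
    h1, ?_, hK, by linarith, hA, grow_root _ _ _ _, neg_grow_root _ _ _ _, ?_, ?_, ?_⟩
  · simpa only [neg_neg] using h2
  · intro u hu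
    rw [grow_ne _ _ _ hu, neg_grow_ne _ _ _ hu]
    have e1 := F.snd_le u hu
    have e2 := F'.snd_le u hu
    have e3 := F.lo' u hu
    have e4 := F'.lo' u hu
    have e5 := F.lo u hu
    have e6 := F'.lo u hu
    have e7 := F.below u hu
    have e8 := F'.below u hu
    simp only [Prod.fst_neg, Prod.snd_neg] at e2 e4 e6 e8
    refine ⟨abs_le.2 ⟨?_, ?_⟩, abs_le.2 ⟨?_, ?_⟩, abs_le.2 ⟨?_, ?_⟩, abs_le.2 ⟨?_, ?_⟩⟩ <;>
      simp only <;> linarith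
  · intro _ _
    obtain ⟨b, hrb, hb, h⟩ := F.first
    refine ⟨b, hrb, ?_, ?_⟩
    · rw [grow_ne _ _ _ hrb.ne', F.top b hrb, hb]
    · intro v hv hvb
      rw [grow_ne _ _ _ hv]
      have := F'.lo v hv
      simp only [Prod.fst_neg] at this
      exact ⟨h v hv hvb, by simp only; linarith⟩
  · intro _ _
    obtain ⟨b, hrb, hb, h⟩ := F'.first
    have ht := F'.top b hrb
    simp only [Prod.fst_neg, Prod.snd_neg] at hb ht h
    refine ⟨b, hrb, ?_, ?_⟩
    · rw [neg_grow_ne _ _ _ hrb.ne', ht, neg_injective hb]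
    · intro v hv hvb
      rw [neg_grow_ne _ _ _ hv]
      have := F.lo v hv
      have := h v hv hvb
      exact ⟨by simp only; linarith, by simp only; linarith⟩

lemma final_of_subsingleton {V : Type} {G : SimpleGraph V} {r : V} (hV : ∀ v, v = r) :
    Final G r 2 2 1 (fun _ => (-2, 2)) (fun _ => (2, -2)) := by
  have hadj : ∀ u v, ¬ G.Adj u v := fun u v h => h.ne ((hV u).trans (hV v).symm)
  have hne : ∀ u v : V, ¬ u ≠ v := fun u v h => h ((hV u).trans (hV v).symm)
  refine ⟨⟨fun u v h => absurd h (hadj u v), fun u v h => absurd h (hne u v),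
    fun u v h => absurd h (hadj u v), fun u v h => absurd h (hadj u v), ?_,
    fun u h => absurd h (hne u r), rfl, ?_, fun u h => absurd h (hne u r)⟩,
    ⟨fun u v h => absurd h (hadj u v), fun u v h => absurd h (hne u v),
    fun u v h => absurd h (hadj u v), fun u v h => absurd h (hadj u v), ?_,
    fun u h => absurd h (hne u r), ?_, ?_, fun u h => absurd h (hne u r)⟩,
    one_pos, one_lt_two, one_lt_two, rfl, rfl, fun u h => absurd h (hne u r),
    fun u h => absurd h (hne u r), fun u h => absurd h (hne u r)⟩ <;> norm_num

lemma exists_final (n : ℕ) : ∀ (V : Type) [Finite V] (G : SimpleGraph V) (r : V),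
    Nat.card V = n → G.IsTree → ∃ X A K Γ Δ, Final G r X A K Γ Δ := by
  induction n using Nat.strong_induction_on with
  | _ n ih =>
  intro V _ G r hn hG
  by_cases hV : ∃ v, v ≠ r
  · obtain ⟨K, Γ, Δ, hK, F, F'⟩ := exists_forest hG r hV fun W _ G' s hW hG' => by
      obtain ⟨X, A, K, Γ, Δ, H⟩ := ih _ (hn ▸ hW) W G' s rfl hG'
      exact ⟨X, Γ, Δ, H.left, H.right⟩
    exact final_of_forest hK F F'
  · push Not at hV
    exact ⟨_, _, _, _, _, final_of_subsingleton hV⟩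

/-! ### The β-regions -/

lemma mem_stripClosed_of_mem_Rclosed {p q w : Plane} {β : ℝ≥0∞} (hβ : 1 ≤ β)
    (h : w ∈ Rclosed p q β) : w ∈ stripClosed p q := by
  unfold Rclosed at h
  split_ifs at h with hT
  · exact h
  have hb : 1 ≤ β.toReal := by
    have := ENNReal.toReal_mono hT hβ
    simpa using this
  set b := β.toReal
  have key : ∀ p q : Plane, dist w (p + (b / 2) • (q - p)) ≤ b * dist p q / 2 →
      0 ≤ ⟪w - p, q - p⟫ := by
    intro p q hd
    rw [dist_comm p q, dist_eq_norm, dist_eq_norm, ← sub_sub] at hd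
    have h2 := pow_le_pow_left₀ (norm_nonneg _) hd 2
    rw [norm_sub_sq_real, inner_smul_right, norm_smul, Real.norm_of_nonneg (by linarith)] at h2
    nlinarith [sq_nonneg ‖w - p‖]
  obtain ⟨h1, h2⟩ := h
  refine ⟨key p q ?_, key q p ?_⟩
  · rw [show p + (b / 2) • (q - p) = (1 - b / 2) • p + (b / 2) • q by module]
    exact Metric.mem_closedBall.1 h1
  · rw [dist_comm q p]
    rw [show q + (b / 2) • (p - q) = (b / 2) • p + (1 - b / 2) • q by module]
    exact Metric.mem_closedBall.1 h2

lemma mem_Ropen_of_inner_neg {p q w : Plane} {β : ℝ≥0∞} (hβ : 1 ≤ β)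
    (h : ⟪p - w, q - w⟫ < 0) : w ∈ Ropen p q β := by
  have key : ∀ p q : Plane, ⟪p - w, q - w⟫ < 0 → ‖w - p‖ ^ 2 < ⟪w - p, q - p⟫ := by
    intro p q h
    have e1 : p - w = -(w - p) := by abel
    have e2 : q - w = (q - p) - (w - p) := by abel
    rw [e1, e2, inner_neg_left, inner_sub_right, real_inner_self_eq_norm_sq] at h
    linarith
  have h1 := key p q h
  have h2 := key q p (by rwa [real_inner_comm])
  unfold Ropen
  split_ifs with hT
  · exact ⟨lt_of_le_of_lt (sq_nonneg _) h1, lt_of_le_of_lt (sq_nonneg _) h2⟩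
  have hb : 1 ≤ β.toReal := by
    have := ENNReal.toReal_mono hT hβ
    simpa using this
  set b := β.toReal
  have key2 : ∀ p q : Plane, ‖w - p‖ ^ 2 < ⟪w - p, q - p⟫ →
      dist w (p + (b / 2) • (q - p)) < b * dist p q / 2 := by
    intro p q hd
    rw [dist_comm p q, dist_eq_norm, dist_eq_norm, ← sub_sub]
    refine lt_of_pow_lt_pow_left₀ 2 (by positivity) ?_
    rw [norm_sub_sq_real, inner_smul_right, norm_smul, Real.norm_of_nonneg (by linarith)]
    nlinarith [sq_nonneg ‖w - p‖]
  refine ⟨Metric.mem_ball.2 ?_, Metric.mem_ball.2 ?_⟩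
  · rw [show (1 - b / 2) • p + (b / 2) • q = p + (b / 2) • (q - p) by module]
    exact key2 p q h1
  · rw [dist_comm p q]
    rw [show (b / 2) • p + (1 - b / 2) • q = q + (b / 2) • (p - q) by module]
    exact key2 q p h2

/-- The point of the plane with given coordinates. -/
def toPlane (p : ℝ × ℝ) : Plane := !₂[p.1, p.2]

lemma toPlane_inj {p q : ℝ × ℝ} : toPlane p = toPlane q ↔ p = q := by
  constructor
  · intro h
    have h0 := congrArg (fun x : Plane => x 0) h
    have h1 := congrArg (fun x : Plane => x 1) h
    exact Prod.ext (by simpa [toPlane] using h0) (by simpa [toPlane] using h1)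
  · rintro rfl; rfl

lemma inner_toPlane (a b c d : ℝ × ℝ) : ⟪toPlane a - toPlane b, toPlane c - toPlane d⟫ =
    (a.1 - b.1) * (c.1 - d.1) + (a.2 - b.2) * (c.2 - d.2) := by
  simp [toPlane, PiLp.inner_apply, Fin.sum_univ_two]
  ring

lemma toPlane_add (p q : ℝ × ℝ) : toPlane p + toPlane q = toPlane (p + q) := by
  ext i; fin_cases i <;> simp [toPlane]

lemma toPlane_smul (t : ℝ) (p : ℝ × ℝ) : t • toPlane p = toPlane (t • p) := by
  ext i; fin_cases i <;> simp [toPlane]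

lemma Half.not_mem_Rclosed {V : Type} {G : SimpleGraph V} {r : V} {h : ℝ} {Γ Δ : V → ℝ × ℝ}
    (H : Half G r h Γ Δ) {β : ℝ≥0∞} (hβ : 1 ≤ β) {u v : V} (huv : G.Adj u v) (w : V) :
    toPlane (Δ w) ∉ Rclosed (toPlane (Γ u)) (toPlane (Γ v)) β := by
  intro hmem
  obtain ⟨h1, h2⟩ := mem_stripClosed_of_mem_Rclosed hβ hmem
  rw [inner_toPlane] at h1 h2
  rcases H.edge u v huv w with h' | h' <;> simp only [ang] at h' <;> linarith

lemma Half.exists_mem_Ropen {V : Type} {G : SimpleGraph V} {r : V} {h : ℝ} {Γ Δ : V → ℝ × ℝ}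
    (H : Half G r h Γ Δ) {β : ℝ≥0∞} (hβ : 1 ≤ β) {u v : V} (hne : u ≠ v) (huv : ¬ G.Adj u v) :
    ∃ w, toPlane (Δ w) ∈ Ropen (toPlane (Γ u)) (toPlane (Γ v)) β := by
  obtain ⟨w, hw⟩ := H.nonedge u v hne huv
  refine ⟨w, mem_Ropen_of_inner_neg hβ ?_⟩
  rwa [inner_toPlane]

lemma Half.injective {V : Type} {G : SimpleGraph V} {r : V} {h : ℝ} {Γ Δ : V → ℝ × ℝ}
    (H : Half G r h Γ Δ) : Function.Injective Γ := by
  intro u v huv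
  by_contra hne
  by_cases hadj : G.Adj u v
  · exact H.xne u v hadj (by rw [huv])
  · obtain ⟨w, hw⟩ := H.nonedge u v hne hadj
    rw [huv] at hw
    simp only [ang] at hw
    nlinarith [sq_nonneg ((Γ v).1 - (Δ w).1), sq_nonneg ((Γ v).2 - (Δ w).2)]

lemma Half.ne {V : Type} {G : SimpleGraph V} {r : V} {h : ℝ} {Γ Δ : V → ℝ × ℝ}
    (H : Half G r h Γ Δ) (hG : G.Connected) (u w : V) : Γ u ≠ Δ w := by
  intro he
  by_cases hu : u = r
  · subst hu
    exact (H.rootx w).ne (by rw [he])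
  · -- A point of `Δ` at `Γ u` would lie in the closed strip of any edge at `u`.
    have : Nontrivial V := ⟨u, r, hu⟩
    obtain ⟨v, hv⟩ := hG.preconnected.exists_adj_of_nontrivial u
    rcases H.edge u v hv w with h' | h' <;> rw [← he] at h' <;> simp only [ang] at h'
    · simp at h'
    · nlinarith [sq_nonneg ((Γ u).1 - (Γ v).1), sq_nonneg ((Γ u).2 - (Γ v).2)]

/-- The parts of the second half of the invariant needed at the end hold for `Δ`, `Γ` without
signs. -/
lemma Half.neg_not_mem_Rclosed {V : Type} {G : SimpleGraph V} {r : V} {h : ℝ} {Γ Δ : V → ℝ × ℝ}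
    (H : Half G r h (fun v => -Δ v) (fun v => -Γ v)) {β : ℝ≥0∞} (hβ : 1 ≤ β) {u v : V}
    (huv : G.Adj u v) (w : V) :
    toPlane (Γ w) ∉ Rclosed (toPlane (Δ u)) (toPlane (Δ v)) β := by
  intro hmem
  obtain ⟨h1, h2⟩ := mem_stripClosed_of_mem_Rclosed hβ hmem
  rw [inner_toPlane] at h1 h2
  rcases H.edge u v huv w with h' | h' <;>
    simp only [ang, Prod.fst_neg, Prod.snd_neg] at h' <;> linarith

lemma Half.neg_exists_mem_Ropen {V : Type} {G : SimpleGraph V} {r : V} {h : ℝ} {Γ Δ : V → ℝ × ℝ}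
    (H : Half G r h (fun v => -Δ v) (fun v => -Γ v)) {β : ℝ≥0∞} (hβ : 1 ≤ β) {u v : V}
    (hne : u ≠ v) (huv : ¬ G.Adj u v) :
    ∃ w, toPlane (Γ w) ∈ Ropen (toPlane (Δ u)) (toPlane (Δ v)) β := by
  obtain ⟨w, hw⟩ := H.nonedge u v hne huv
  refine ⟨w, mem_Ropen_of_inner_neg hβ ?_⟩
  rw [inner_toPlane]
  simp only [ang, Prod.fst_neg, Prod.snd_neg] at hw
  linarith

/-! ### The bounding parallelogram -/

/-- The parallelogram contains the rectangle with opposite corners `b₀` and `b₁`. -/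
lemma rectangle_subset {S : Set (ℝ × ℝ)} (hS : Convex ℝ S) {A X K : ℝ} (hK : 0 < K) (hX : K < X)
    (hA : 1 < A) (h0 : (-A, X) ∈ S) (h1 : (-1, -K) ∈ S) (h2 : (A, -X) ∈ S) (h3 : (1, K) ∈ S)
    {p : ℝ × ℝ} (hp1 : |p.1| ≤ 1) (hp2 : |p.2| ≤ K) : p ∈ S := by
  have comb : ∀ p q : ℝ × ℝ, p ∈ S → q ∈ S → ∀ s : ℝ, 0 ≤ s → s ≤ 1 →
      ((1 - s) * p.1 + s * q.1, (1 - s) * p.2 + s * q.2) ∈ S := by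
    intro p q hp hq s hs hs'
    have := hS hp hq (sub_nonneg.2 hs') hs (by ring)
    simpa [Prod.smul_def] using this
  -- The side `b₁a₀` meets the line `x = -1` at height `K'`, above the corner `(-1, K)`.
  set t := 2 / (1 + A) with ht
  have ht0 : 0 < t := by positivity
  have ht1 : t ≤ 1 := by
    rw [ht, div_le_one (by linarith)]; linarith
  have htA : t * (1 + A) = 2 := div_mul_cancel₀ _ (by linarith)
  set K' := K + t * (X - K) with hK'
  have hKK : K < K' := by
    have := mul_pos ht0 (sub_pos.2 hX)
    linarith
  set s := 2 * K / (K' + K) with hs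
  have hs0 : 0 ≤ s := div_nonneg (by linarith) (by linarith)
  have hs1 : s ≤ 1 := by
    rw [hs, div_le_one (by linarith)]; linarith
  have hsK : s * (K' + K) = 2 * K := div_mul_cancel₀ _ (by linarith)
  have c1 : ((-1, K) : ℝ × ℝ) ∈ S := by
    have := comb _ _ h1 (comb _ _ h3 h0 t ht0.le ht1) s hs0 hs1
    convert this using 1
    ext
    · simp only; linear_combination s * htA
    · simp only; linear_combination -hsK + s * hK'
  have c2 : ((1, -K) : ℝ × ℝ) ∈ S := by
    have := comb _ _ h3 (comb _ _ h1 h2 t ht0.le ht1) s hs0 hs1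
    convert this using 1
    ext
    · simp only; linear_combination -s * htA
    · simp only; linear_combination hsK - s * hK'
  obtain ⟨x, y⟩ := p
  obtain ⟨hx, hx'⟩ := abs_le.1 hp1
  obtain ⟨hy, hy'⟩ := abs_le.1 hp2
  simp only at hx hx' hy hy'
  set m := (y + K) / (2 * K) with hm
  have hm0 : 0 ≤ m := div_nonneg (by linarith) (by linarith)
  have hm1 : m ≤ 1 := by
    rw [hm, div_le_one (by linarith)]; linarith
  have hmK : m * (2 * K) = y + K := div_mul_cancel₀ _ (by linarith)
  have := comb _ _ (comb _ _ h1 c1 m hm0 hm1) (comb _ _ c2 h3 m hm0 hm1) ((x + 1) / 2)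
    (by linarith) (by linarith)
  convert this using 1
  ext
  · simp only; ring
  · simp only; linear_combination -hmK

lemma nicelyOriented {A X K : ℝ} (hK : 0 < K) (hX : K < X) (hA : 1 < A) :
    NicelyOriented (toPlane (-A, X)) (toPlane (-1, -K)) (toPlane (A, -X)) (toPlane (1, K)) := by
  refine ⟨?_, ?_, ?_, ?_, ?_, ?_, ?_, ?_, ?_⟩
  · rw [toPlane_add, toPlane_add]; simp
  · rw [dist_eq_norm, dist_eq_norm]
    refine lt_of_pow_lt_pow_left₀ 2 (norm_nonneg _) ?_
    rw [← real_inner_self_eq_norm_sq, ← real_inner_self_eq_norm_sq, inner_toPlane, inner_toPlane]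
    simp only
    nlinarith
  · rw [inner_toPlane]
    simp only
    nlinarith
  all_goals simp only [toPlane]
  all_goals simp
  all_goals linarith

lemma Final.mem_hull {V : Type} {G : SimpleGraph V} {r : V} {X A K : ℝ} {Γ Δ : V → ℝ × ℝ}
    (F : Final G r X A K Γ Δ) (v : V) :
    toPlane (Γ v) ∈ convexHull ℝ {toPlane (-A, X), toPlane (-1, -K), toPlane (A, -X),
      toPlane (1, K)} ∧
    toPlane (Δ v) ∈ convexHull ℝ {toPlane (-A, X), toPlane (-1, -K), toPlane (A, -X),
      toPlane (1, K)} := by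
  set H := convexHull ℝ {toPlane (-A, X), toPlane (-1, -K), toPlane (A, -X), toPlane (1, K)}
  have hS : Convex ℝ (toPlane ⁻¹' H) := by
    intro p hp q hq a b ha hb hab
    rw [Set.mem_preimage, ← toPlane_add, ← toPlane_smul, ← toPlane_smul]
    exact convex_convexHull ℝ _ hp hq ha hb hab
  have h0 : (-A, X) ∈ toPlane ⁻¹' H := subset_convexHull ℝ _ (by simp)
  have h1 : (-1, -K) ∈ toPlane ⁻¹' H := subset_convexHull ℝ _ (by simp)
  have h2 : (A, -X) ∈ toPlane ⁻¹' H := subset_convexHull ℝ _ (by simp)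
  have h3 : (1, K) ∈ toPlane ⁻¹' H := subset_convexHull ℝ _ (by simp)
  by_cases hv : v = r
  · subst hv
    rw [F.rootΓ, F.rootΔ]
    exact ⟨h0, h2⟩
  · obtain ⟨b1, b2, b3, b4⟩ := F.box v hv
    exact ⟨rectangle_subset hS F.K_pos F.K_lt F.A_gt h0 h1 h2 h3 b1 b2,
      rectangle_subset hS F.K_pos F.K_lt F.A_gt h0 h1 h2 h3 b3 b4⟩

/-- Any two isomorphic (finite) trees, rooted at a vertex `r₀` and its isomorphic
image `r₁`, admit a single pair of drawings that is an MW-β parallelogram drawing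
simultaneously for every β ∈ [1,∞]. -/
theorem isomorphic_trees_parallelogram_drawing {V₀ V₁ : Type} [Fintype V₀] [Fintype V₁]
    (G₀ : SimpleGraph V₀) (G₁ : SimpleGraph V₁)
    (h₀ : G₀.IsTree) (h₁ : G₁.IsTree) (φ : G₀ ≃g G₁)
    (r₀ : V₀) (r₁ : V₁) (hr : φ r₀ = r₁) :
    ∃ (Γ₀ : V₀ → Plane) (Γ₁ : V₁ → Plane) (a₀ b₀ a₁ b₁ : Plane),
      ∀ β : ℝ≥0∞, 1 ≤ β →
        IsMWParallelogramDrawing G₀ G₁ r₀ r₁ Γ₀ Γ₁ a₀ b₀ a₁ b₁ β := by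
  obtain ⟨X, A, K, Γ, Δ, F⟩ := exists_final _ V₀ G₀ r₀ rfl h₀
  refine ⟨fun v => toPlane (Γ v), fun v => toPlane (Δ (φ.symm v)), toPlane (-A, X),
    toPlane (-1, -K), toPlane (A, -X), toPlane (1, K), fun β hβ => ?_⟩
  have hr' : φ.symm r₁ = r₀ := by rw [← hr, φ.symm_apply_apply]
  have hadj : ∀ u v, G₀.Adj (φ.symm u) (φ.symm v) ↔ G₁.Adj u v := fun u v => φ.symm.map_adj_iff
  have hΔinj : Function.Injective Δ := fun u v huv =>
    F.right.injective (by simp only [huv])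
  have hne : ∀ {W : Type} [Fintype W] (s : W), 1 < Fintype.card W → ∃ u, u ≠ s := by
    intro W _ s h
    have : Nontrivial W := Fintype.one_lt_card_iff_nontrivial.1 h
    exact exists_ne s
  refine ⟨⟨⟨?_, ?_, ?_⟩, ?_, ?_⟩, nicelyOriented F.K_pos F.K_lt F.A_gt, ?_, ?_, ?_, ?_, ?_, ?_, ?_⟩
  · intro u v huv
    exact F.left.injective (toPlane_inj.1 huv)
  · intro u v huv
    exact φ.symm.injective (hΔinj (toPlane_inj.1 huv))
  · rw [Set.disjoint_left]
    rintro _ ⟨u, rfl⟩ ⟨w, hw⟩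
    exact F.left.ne h₀.1 u _ (toPlane_inj.1 hw.symm)
  · intro u v huv
    refine ⟨fun h w => F.left.not_mem_Rclosed hβ h _, fun h => ?_⟩
    obtain ⟨w, hw⟩ := F.left.exists_mem_Ropen hβ huv h
    exact ⟨φ w, by simpa using hw⟩
  · intro u v huv
    refine ⟨fun h w => F.right.neg_not_mem_Rclosed hβ ((hadj u v).2 h) _, fun h => ?_⟩
    exact F.right.neg_exists_mem_Ropen hβ (φ.symm.injective.ne huv) (fun h' => h ((hadj u v).1 h'))
  · rintro _ (⟨v, rfl⟩ | ⟨v, rfl⟩)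
    · exact (F.mem_hull v).1
    · exact (F.mem_hull _).2
  · exact congrArg toPlane F.rootΓ
  · show toPlane (Δ (φ.symm r₁)) = _
    rw [hr', F.rootΔ]
  · intro hcard
    obtain ⟨u, hu⟩ := hne r₀ hcard
    obtain ⟨b, hb, hb', h⟩ := F.first u hu
    refine ⟨b, hb, congrArg toPlane hb', fun v hv hvb => ?_⟩
    simpa [toPlane] using h v hv hvb
  · intro hcard
    obtain ⟨u, hu⟩ := hne r₁ hcard
    obtain ⟨b, hb, hb', h⟩ := F.last (φ.symm u) (fun h => hu (φ.symm.injective (h.trans hr'.symm)))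
    refine ⟨φ b, ?_, ?_, fun v hv hvb => ?_⟩
    · rw [← hr]
      exact φ.map_adj_iff.2 hb
    · simp [hb']
    · have := h (φ.symm v) (fun h => hv (φ.symm.injective (h.trans hr'.symm)))
        (fun h => hvb (by rw [← h, φ.apply_symm_apply]))
      simpa [toPlane] using this
  · intro u v huv
    simpa [toPlane] using F.left.xne u v huv
  · intro u v huv
    have := F.right.xne _ _ ((hadj u v).2 huv)
    simpa [toPlane] using this

end
end

section
/- Let (T,r) be a rooted tree and let 𝓛 be a sparse set of leaves of T. Then the pair ⟨T, T∖𝓛⟩ of trees, where T∖𝓛 is the tree obtained from T by deleting the leaves in 𝓛, admits a pair of drawings that is an MW-β drawing simultaneously for every β ∈ [1,∞]. -/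
/-!
The regions grow with `β`, from the disk with diameter `pq` (`β = 1`) to the strip (`β = ∞`). So one
pair of drawings serves all `β` once adjacent pairs have no point of the other drawing in their
closed *strip* (`not_mem_Rclosed`) and non-adjacent pairs have one in their open *disk*
(`mem_Ropen`), which are sign conditions on inner products.

The drawings are built from the leaves up (`exists_good`); the invariant `Good` describes the pair of
drawings of the subtree below a vertex. The two copies of the root are leftmost and rightmost; every
other vertex has a witness of the other drawing between itself and the side of its own root; and
every vertex has a witness above it (first drawing) or below it (second drawing). In the inductive
step (`exists_good_step`) the drawings for the children of `p` are shrunk by a small factor, put on a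
vertical line at different heights, and flanked by the two copies of `p`, placed very far to the
left and to the right. For vertices below different children the vertical witnesses work, and for
`p` and a vertex below one of its children the horizontal ones do. A quarter turn of the result
exchanges the two kinds of witnesses and restores the invariant; edges remain oblique, so the strip
of a tiny edge avoids every remote point.

A leaf `v ∈ L` has no copy in the second drawing, hence no vertical witness. It is placed as the
extreme child of its parent, so its siblings still provide the disk witnesses against it. Only the
pair consisting of `v` and its grandparent lacks a witness within the parent's drawing. There,
sparseness helps: `v` is kept in the right half of its parent's drawing, while the drawing of the
cousin's parent, which has no child in `L`, has a witness in its left half.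
-/

open scoped RealInnerProductSpace ENNReal

noncomputable section

/-- In the tree `T` rooted at `r`, `p` is the parent of `v`. -/
def IsParentOf {V : Type*} (T : SimpleGraph V) (r p v : V) : Prop :=
  T.Adj p v ∧ T.dist r p + 1 = T.dist r v

/-- `v` and `v'` are siblings in the tree `T` rooted at `r`. -/
def IsSiblingOf {V : Type*} (T : SimpleGraph V) (r v v' : V) : Prop :=
  v ≠ v' ∧ ∃ p, IsParentOf T r p v ∧ IsParentOf T r p v'

/-- `v'` is a cousin of `v` in the tree `T` rooted at `r`: they have a common
grandparent but distinct parents. -/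
def IsCousinOf {V : Type*} (T : SimpleGraph V) (r v v' : V) : Prop :=
  ∃ w p p', p ≠ p' ∧ IsParentOf T r w p ∧ IsParentOf T r w p' ∧
    IsParentOf T r p v ∧ IsParentOf T r p' v'

/-- A leaf of a tree: a vertex with exactly one neighbor. -/
def IsTreeLeaf {V : Type*} (T : SimpleGraph V) (v : V) : Prop :=
  ∃! u, T.Adj v u

/-- A sparse set of leaves of the tree `T` rooted at `r`. -/
def SparseLeafSet {V : Type*} (T : SimpleGraph V) (r : V) (L : Set V) : Prop :=
  L.Nonempty ∧ (∀ v ∈ L, IsTreeLeaf T v) ∧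
    ∀ v ∈ L,
      (∃ v', IsSiblingOf T r v v') ∧
      (∀ v', IsSiblingOf T r v v' → IsTreeLeaf T v' ∧ v' ∉ L) ∧
      (∃ w, IsCousinOf T r v w ∧ w ∉ L ∧ ∀ w', IsSiblingOf T r w w' → w' ∉ L)

open Filter Topology Relation

/-! ### The inductive invariant -/

/-- The sign of a side: `+1` for the drawing of the full tree (`true`), `-1` for the drawing of the
pruned tree (`false`). -/
def sg (s : Bool) : ℝ := if s then 1 else -1

/-- Vertex `u` is present in the tree on side `s`: the full tree (`true`) has all vertices, the
pruned tree (`false`) has those outside `L`. -/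
def Present {V : Type} (L : Set V) (s : Bool) (u : V) : Prop := s = false → u ∉ L

/-- The combinatorics of a rooted forest with a set `L` of prunable leaves, in terms of the parent
relation: `Par p v` says that `p` is the parent of `v`, and `d` is the depth. -/
structure Rooted {V : Type} (Par : V → V → Prop) (d : V → ℕ) (L : Set V) : Prop where
  depth : ∀ p v, Par p v → d p + 1 = d v
  unique : ∀ p q v, Par p v → Par q v → p = q
  /-- Vertices in `L` have no children. -/
  leaf : ∀ u ∈ L, ∀ w, ¬ Par u w
  /-- No sibling of a vertex in `L` is in `L`. -/
  single : ∀ u ∈ L, ∀ p c, Par p u → Par p c → c ≠ u → c ∉ L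
  /-- If `u ∈ L` has a grandparent `q`, then `q` has a child with children, none of them in `L`. -/
  cousin : ∀ u ∈ L, ∀ p q, Par p u → Par q p →
    ∃ c, Par q c ∧ (∃ w, Par c w) ∧ ∀ w, Par c w → w ∉ L

/-- The inductive invariant: simultaneous drawings of the subtree below `v` and of its pruned
version, side `s` placing the vertex `u` at the point with coordinates `X s u`, `Y s u`. Vertices of
`L` also receive a position on the pruned side, but they never serve as witnesses there. -/
structure Good {V : Type} (Par : V → V → Prop) (L : Set V) (v : V) (X Y : Bool → V → ℝ) :
    Prop where
  /-- The two roots are at the extreme left and the extreme right. -/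
  root : ∀ s, X s v = - sg s
  bnd : ∀ s u, ReflTransGen Par v u → u ≠ v → |X s u| < 1
  /-- Every vertex other than the root, except for a child of the root lying in `L`, has a witness
  strictly closer to the side of its own root: further left in the full tree, further right in the
  pruned one. -/
  xwit : ∀ s u, ReflTransGen Par v u → u ≠ v → Present L s u → ¬ (u ∈ L ∧ Par v u) →
    ∃ w, ReflTransGen Par v w ∧ Present L (!s) w ∧ sg s * X (!s) w < sg s * X s u
  /-- The exceptional vertices of `xwit` lie in the right half. -/
  exc : ∀ u ∈ L, Par v u → 0 < X true u
  /-- A vertex without exceptional children, but with children, offers a witness in the left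
  half. -/
  pos : (∀ u, Par v u → u ∉ L) → (∃ u, Par v u) →
    ∃ w, ReflTransGen Par v w ∧ w ∉ L ∧ X false w < 0
  /-- Every vertex has a witness above it in the full tree, and below it in the pruned one; a subtree
  consisting of a single vertex of `L` has no witness at all. -/
  ywit : v ∉ L → ∀ s u, ReflTransGen Par v u → Present L s u →
    ∃ w, ReflTransGen Par v w ∧ Present L (!s) w ∧ sg s * Y s u < sg s * Y (!s) w
  /-- No edge is parallel to an axis. -/
  edge : ∀ s a b, ReflTransGen Par v a → ReflTransGen Par v b → Par a b →
    X s a ≠ X s b ∧ Y s a ≠ Y s b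
  /-- The closed strip of an edge contains no vertex of the other side. -/
  adj : ∀ s a b, ReflTransGen Par v a → ReflTransGen Par v b → Par a b →
    ∀ w, ReflTransGen Par v w →
      (X (!s) w - X s a) * (X s b - X s a) + (Y (!s) w - Y s a) * (Y s b - Y s a) < 0 ∨
      (X (!s) w - X s b) * (X s a - X s b) + (Y (!s) w - Y s b) * (Y s a - Y s b) < 0
  /-- The open disk spanned by a non-adjacent pair contains a vertex of the other side. -/
  nonadj : ∀ s a b, ReflTransGen Par v a → ReflTransGen Par v b → a ≠ b → ¬ Par a b →
    ¬ Par b a → Present L s a → Present L s b →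
    ∃ w, ReflTransGen Par v w ∧ Present L (!s) w ∧
      (X (!s) w - X s a) * (X (!s) w - X s b) + (Y (!s) w - Y s a) * (Y (!s) w - Y s b) < 0

/-! ### Choice of the parameters -/

lemma eventually_small {f : ℝ → ℝ} (hf : Continuous f) (h0 : f 0 < 0) :
    ∀ᶠ e in 𝓝[>] (0 : ℝ), f e < 0 :=
  (hf.continuousAt.eventually (Iio_mem_nhds h0)).filter_mono nhdsWithin_le_nhds

lemma eventually_large {k : ℝ} (a : ℝ) (hk : k < 0) : ∀ᶠ M in atTop, a + k * M < 0 := by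
  filter_upwards [eventually_gt_atTop (a / (-k))] with M hM
  rw [div_lt_iff₀ (by linarith)] at hM
  linarith

/-- A scale `e` for the child drawings that is small against the gaps between their offsets `H`.
The expressions in the last two conclusions are, up to the factor `e`, the inner products that
decide whether a vertex of another child drawing lies in the strip of an edge, and whether a vertical
witness for `u` lies in the disk spanned by `u` and a vertex `u'` of another child drawing. -/
lemma exists_scale {V : Type} [Finite V] (Par : V → V → Prop) (C : V → Prop)
    (x y : Bool → V → ℝ) (H : V → ℝ)
    (hH : ∀ u, C u → |H u| < 1)
    (hy : ∀ s u u', C u → C u' → Par u u' → y s u ≠ y s u') :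
    ∃ e : ℝ, 0 < e ∧ (∀ s u, C u → |H u - e * y s u| < 1) ∧
      (∀ s u, C u → H u < 0 → H u - e * y s u < 0) ∧
      (∀ s u, C u → 0 < H u → 0 < H u - e * y s u) ∧
      (∀ s u u' w, C u → C u' → Par u u' → H w ≠ H u →
        ((H w - H u - e * (y (!s) w - y s u)) * (-(y s u' - y s u)) +
            e * (x (!s) w - x s u) * (x s u' - x s u) < 0 ∨
          (H w - H u - e * (y (!s) w - y s u')) * (-(y s u - y s u')) +
            e * (x (!s) w - x s u') * (x s u - x s u') < 0)) ∧
      (∀ s u u' w, 0 < sg s * (H u - H u') → sg s * y s u < sg s * y (!s) w →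
        (-(y (!s) w - y s u)) * (H u - H u' - e * (y (!s) w - y s u')) +
          e * (x (!s) w - x s u) * (x (!s) w - x s u') < 0) := by
  have key : ∀ᶠ e in 𝓝[>] (0 : ℝ), 0 < e ∧ (∀ s u, C u → |H u - e * y s u| < 1) ∧
      (∀ s u, C u → H u < 0 → H u - e * y s u < 0) ∧
      (∀ s u, C u → 0 < H u → 0 < H u - e * y s u) ∧
      (∀ s u u' w, C u → C u' → Par u u' → H w ≠ H u →
        ((H w - H u - e * (y (!s) w - y s u)) * (-(y s u' - y s u)) +
            e * (x (!s) w - x s u) * (x s u' - x s u) < 0 ∨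
          (H w - H u - e * (y (!s) w - y s u')) * (-(y s u - y s u')) +
            e * (x (!s) w - x s u') * (x s u - x s u') < 0)) ∧
      (∀ s u u' w, 0 < sg s * (H u - H u') → sg s * y s u < sg s * y (!s) w →
        (-(y (!s) w - y s u)) * (H u - H u' - e * (y (!s) w - y s u')) +
          e * (x (!s) w - x s u) * (x (!s) w - x s u') < 0) := by
    simp only [eventually_and, eventually_all]
    refine ⟨self_mem_nhdsWithin, ?_, ?_, ?_, ?_, ?_⟩
    · intro s u hu
      have := eventually_small (f := fun e => |H u - e * y s u| - 1) (by fun_prop)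
        (by simpa using hH u hu)
      filter_upwards [this] with e he
      linarith
    · intro s u hu h0
      exact eventually_small (f := fun e => H u - e * y s u) (by fun_prop) (by simpa using h0)
    · intro s u hu h0
      have := eventually_small (f := fun e => -(H u - e * y s u)) (by fun_prop) (by simpa using h0)
      filter_upwards [this] with e he
      linarith
    · intro s u u' w hu hu' hp hw
      have h1 : (H w - H u) * (y s u' - y s u) ≠ 0 :=
        mul_ne_zero (sub_ne_zero.2 hw) (sub_ne_zero.2 (hy s u u' hu hu' hp).symm)
      rcases lt_or_gt_of_ne h1 with h | h
      · have := eventually_small (f := fun e => (H w - H u - e * (y (!s) w - y s u')) *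
          (-(y s u - y s u')) + e * (x (!s) w - x s u') * (x s u - x s u')) (by fun_prop)
          (by simp; linarith)
        filter_upwards [this] with e he using Or.inr he
      · have := eventually_small (f := fun e => (H w - H u - e * (y (!s) w - y s u)) *
          (-(y s u' - y s u)) + e * (x (!s) w - x s u) * (x s u' - x s u)) (by fun_prop)
          (by simp; linarith)
        filter_upwards [this] with e he using Or.inl he
    · intro s u u' w h1 h2
      refine eventually_small (f := fun e => (-(y (!s) w - y s u)) *
        (H u - H u' - e * (y (!s) w - y s u')) +
          e * (x (!s) w - x s u) * (x (!s) w - x s u')) (by fun_prop) ?_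
      cases s <;> simp [sg] at h1 h2 ⊢ <;> nlinarith
  exact key.exists

/-- A distance `M` for the two copies of the new root that is large against everything else. `N` is
the first coordinate of the new drawing, `e * x` the second one below the children, and `± (1, M)`
are the positions of the copies of the new root. The conclusions concern, in this order, the edges
inside child drawings against the copy of the root on the other side, the edges from the root to its
children (`D`), and the disks spanned by the root and a vertex `u`. -/
lemma exists_far {V : Type} [Finite V] (Par : V → V → Prop) (C D : V → Prop)
    (x N : Bool → V → ℝ) (e : ℝ) (he : 0 < e)
    (hx : ∀ s u u', C u → C u' → Par u u' → x s u ≠ x s u')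
    (hD : ∀ s u, D u → x s u = - sg s)
    (hr : ∀ s u, C u → -1 < sg s * x (!s) u) :
    ∃ M : ℝ, 0 < M ∧ e < M ∧
      (∀ s u u', C u → C u' → Par u u' →
        ((sg s - N s u) * (N s u' - N s u) + (sg s * M - e * x s u) * (e * x s u' - e * x s u) < 0 ∨
        (sg s - N s u') * (N s u - N s u') +
          (sg s * M - e * x s u') * (e * x s u - e * x s u') < 0)) ∧
      (∀ s c w, D c → C w →
        (N (!s) w - N s c) * (- sg s - N s c) +
          (e * x (!s) w - e * x s c) * (- (sg s * M) - e * x s c) < 0) ∧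
      (∀ s u w, sg s * x (!s) w < sg s * x s u →
        (N (!s) w - - sg s) * (N (!s) w - N s u) +
          (e * x (!s) w - - (sg s * M)) * (e * x (!s) w - e * x s u) < 0) := by
  have key : ∀ᶠ M in (atTop : Filter ℝ), 0 < M ∧ e < M ∧
      (∀ s u u', C u → C u' → Par u u' →
        ((sg s - N s u) * (N s u' - N s u) + (sg s * M - e * x s u) * (e * x s u' - e * x s u) < 0 ∨
        (sg s - N s u') * (N s u - N s u') +
          (sg s * M - e * x s u') * (e * x s u - e * x s u') < 0)) ∧
      (∀ s c w, D c → C w →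
        (N (!s) w - N s c) * (- sg s - N s c) +
          (e * x (!s) w - e * x s c) * (- (sg s * M) - e * x s c) < 0) ∧
      (∀ s u w, sg s * x (!s) w < sg s * x s u →
        (N (!s) w - - sg s) * (N (!s) w - N s u) +
          (e * x (!s) w - - (sg s * M)) * (e * x (!s) w - e * x s u) < 0) := by
    simp only [eventually_and, eventually_all]
    refine ⟨eventually_gt_atTop 0, eventually_gt_atTop e, ?_, ?_, ?_⟩
    · intro s u u' hu hu' hp
      have h1 : sg s * (e * x s u' - e * x s u) ≠ 0 := by
        rw [← mul_sub]
        refine mul_ne_zero (by cases s <;> simp [sg])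
          (mul_ne_zero he.ne' (sub_ne_zero.2 (hx s u u' hu hu' hp).symm))
      rcases lt_or_gt_of_ne h1 with h | h
      · filter_upwards [eventually_large ((sg s - N s u) * (N s u' - N s u) +
          (- e * x s u) * (e * x s u' - e * x s u)) h] with M hM
        left
        linarith
      · filter_upwards [eventually_large ((sg s - N s u') * (N s u - N s u') +
          (- e * x s u') * (e * x s u - e * x s u')) (neg_neg_of_pos h)] with M hM
        right
        linarith
    · intro s c w hc hw
      have h1 : -(e * (sg s * x (!s) w + 1)) < 0 := by
        have := mul_pos he (show 0 < sg s * x (!s) w + 1 by linarith [hr s w hw])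
        linarith
      filter_upwards [eventually_large ((N (!s) w - N s c) * (- sg s - N s c) +
          (e * x (!s) w - e * x s c) * (- e * x s c)) h1] with M hM
      have h2 := hD s c hc
      have h3 : sg s * sg s = 1 := by cases s <;> simp [sg]
      rw [h2] at hM ⊢
      linear_combination hM + (-e * M) * h3
    · intro s u w h
      have h1 : e * (sg s * x (!s) w - sg s * x s u) < 0 :=
        mul_neg_of_pos_of_neg he (by linarith)
      filter_upwards [eventually_large ((N (!s) w - - sg s) * (N (!s) w - N s u) +
          (e * x (!s) w) * (e * x (!s) w - e * x s u)) h1] with M hM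
      linarith
  exact key.exists

/-! ### Descendants -/

section Descendants

variable {V : Type} {Par : V → V → Prop} {d : V → ℕ} {L : Set V}

lemma Rooted.desc_depth (h : Rooted Par d L) {a b : V} (hab : ReflTransGen Par a b) :
    a = b ∨ d a < d b := by
  induction hab with
  | refl => exact Or.inl rfl
  | tail _ h2 ih =>
    have := h.depth _ _ h2
    right
    rcases ih with rfl | ih <;> omega

lemma Rooted.ne_of_child (h : Rooted Par d L) {p c u : V} (hc : Par p c)
    (hu : ReflTransGen Par c u) : u ≠ p := by
  rintro rfl
  have := h.depth _ _ hc
  rcases h.desc_depth hu with rfl | h1 <;> omega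

/-- The subtrees below two different children of `p` are disjoint. -/
lemma Rooted.child_unique (h : Rooted Par d L) {p c c' u : V} (hc : Par p c) (hc' : Par p c')
    (hu : ReflTransGen Par c u) (hu' : ReflTransGen Par c' u) : c = c' := by
  have hd : d c = d c' := (h.depth _ _ hc).symm.trans (h.depth _ _ hc')
  induction hu with
  | refl => rcases h.desc_depth hu' with h1 | h1
            · exact h1.symm
            · omega
  | @tail b u h1 h2 ih =>
    rcases hu'.cases_tail with rfl | ⟨b', h3, h4⟩
    · rcases h.desc_depth (h1.tail h2) with h5 | h5
      · exact h5
      · omega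
    · rw [h.unique _ _ _ h2 h4] at ih
      exact ih h3

end Descendants

/-! ### The inductive construction -/

/-- Distinct offsets in `(-1, 1)` for the drawings of the children of a vertex, along the axis
joining its two copies: all negative if no child is in `L`; otherwise all positive, the child in `L`
having the smallest. (`D` singles out the children.) -/
lemma exists_offsets {V : Type} [Finite V] (D : V → Prop) (L : Set V)
    (hs : ∀ u ∈ L, ∀ c, D u → D c → c ≠ u → c ∉ L) :
    ∃ h : V → ℝ, (∀ c, |h c| < 1) ∧ (∀ c c', D c → D c' → h c = h c' → c = c') ∧
      ((∀ c, D c → c ∉ L) → ∀ c, h c < 0) ∧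
      (∀ u ∈ L, D u → 0 < h u ∧ ∀ c, D c → c ≠ u → h u < h c) := by
  classical
  obtain ⟨n, ⟨f⟩⟩ := Finite.exists_equiv_fin V
  have hlt : ∀ c, ((f c : ℕ) : ℝ) < n := fun c => by exact_mod_cast (f c).2
  have hinj : ∀ c c', ((f c : ℕ) : ℝ) = (f c' : ℕ) → c = c' := fun c c' hcc =>
    f.injective (Fin.ext (by exact_mod_cast hcc))
  have hn0 : (0 : ℝ) ≤ n := n.cast_nonneg
  by_cases hb : ∃ u ∈ L, D u
  · obtain ⟨v, hv, hDv⟩ := hb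
    have hn : (0 : ℝ) < n + 2 := by linarith
    refine ⟨fun c => (if c = v then (1 : ℝ) else (f c : ℕ) + 2) / (n + 2), fun c => ?_,
      fun c c' _ _ hcc => ?_, fun hno => absurd hv (hno v hDv), fun u hu hDu => ?_⟩
    · have h0 : (0 : ℝ) ≤ (f c : ℕ) := Nat.cast_nonneg _
      beta_reduce
      rw [abs_of_nonneg (by split_ifs <;> positivity), div_lt_one hn]
      split_ifs <;> linarith [hlt c]
    · have h0 : (0 : ℝ) ≤ (f c : ℕ) := Nat.cast_nonneg _
      have h0' : (0 : ℝ) ≤ (f c' : ℕ) := Nat.cast_nonneg _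
      simp only [div_left_inj' hn.ne'] at hcc
      split_ifs at hcc with h1 h2 h2
      · rw [h1, h2]
      · linarith
      · linarith
      · exact hinj c c' (by linarith)
    · have huv : u = v := by
        by_contra hne
        exact hs v hv u hDv hDu hne hu
      subst huv
      refine ⟨by simp; positivity, fun c _ hc => ?_⟩
      have h0 : (0 : ℝ) ≤ (f c : ℕ) := Nat.cast_nonneg _
      simp only [if_true, if_neg hc]
      exact div_lt_div_of_pos_right (by linarith) hn
  · have hn : (0 : ℝ) < n + 1 := by linarith
    refine ⟨fun c => -(((f c : ℕ) + 1) / (n + 1)), fun c => ?_, fun c c' _ _ hcc => ?_,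
      fun _ c => by simp; positivity, fun u hu hDu => absurd ⟨u, hu, hDu⟩ hb⟩
    · rw [abs_neg, abs_of_nonneg (by positivity), div_lt_one hn]
      linarith [hlt c]
    · simp only [neg_inj, div_left_inj' hn.ne'] at hcc
      exact hinj c c' (by linarith)

/-- Drawings of the subtrees below the children of `p` combine to a drawing of the subtree below
`p`: turned by a right angle, `(x, y) ↦ (-y, x)`, and shrunk by `e`, they are centred at the points
`(ht c, 0)` with distinct offsets `ht c`, and the two copies of `p` are put at `± (1, M)`. -/
lemma exists_good_step {V : Type} [Finite V] {Par : V → V → Prop} {d : V → ℕ} {L : Set V}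
    (h : Rooted Par d L) (p : V) (ih : ∀ c, Par p c → ∃ X Y, Good Par L c X Y) :
    ∃ X Y, Good Par L p X Y := by
  classical
  choose! X0 Y0 hg using ih
  have hex : ∀ u, ∃ c, ReflTransGen Par p u → u ≠ p → Par p c ∧ ReflTransGen Par c u := by
    intro u
    by_cases hu : ReflTransGen Par p u ∧ u ≠ p
    · rcases hu.1.cases_head with h1 | ⟨c, h1, h2⟩
      · exact absurd h1.symm hu.2
      · exact ⟨c, fun _ _ => ⟨h1, h2⟩⟩
    · exact ⟨p, fun h1 h2 => absurd ⟨h1, h2⟩ hu⟩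
  choose ch hch using hex
  obtain ⟨ht, ht1, ht2, ht3, ht4⟩ := exists_offsets (Par p) L
    (fun u hu c h1 h2 h3 => h.single u hu p c h1 h2 h3)
  obtain ⟨C, hC⟩ : ∃ C : V → Prop, ∀ u, C u ↔ ReflTransGen Par p u ∧ u ≠ p := ⟨_, fun _ => Iff.rfl⟩
  have hcu : ∀ u, C u → Par p (ch u) ∧ ReflTransGen Par (ch u) u := fun u hu =>
    hch u ((hC u).1 hu).1 ((hC u).1 hu).2
  have hsub : ∀ c u, Par p c → ReflTransGen Par c u → C u ∧ ch u = c := by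
    intro c u hc hu
    have h1 : C u := (hC u).2 ⟨hu.head hc, h.ne_of_child hc hu⟩
    exact ⟨h1, h.child_unique (hcu u h1).1 hc (hcu u h1).2 hu⟩
  have hD : ∀ c, Par p c → ch c = c := fun c hc => (hsub c c hc .refl).2
  have hDC : ∀ c, Par p c → C c := fun c hc => (hsub c c hc .refl).1
  have hleaf : ∀ u, C u → ch u ∈ L → u = ch u := by
    intro u hu hl
    rcases (hcu u hu).2.cases_head with h1 | ⟨c, h1, _⟩
    · exact h1.symm
    · exact absurd h1 (h.leaf _ hl c)
  have hpar : ∀ u u', C u → Par u u' → C u' ∧ ch u' = ch u := fun u u' hu hp =>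
    hsub _ _ (hcu u hu).1 ((hcu u hu).2.tail hp)
  obtain ⟨x, hx⟩ : ∃ x : Bool → V → ℝ, ∀ s u, x s u = X0 (ch u) s u := ⟨_, fun _ _ => rfl⟩
  obtain ⟨y, hy⟩ : ∃ y : Bool → V → ℝ, ∀ s u, y s u = Y0 (ch u) s u := ⟨_, fun _ _ => rfl⟩
  obtain ⟨H, hH⟩ : ∃ H : V → ℝ, ∀ u, H u = ht (ch u) := ⟨_, fun _ => rfl⟩
  have hHne : ∀ u u', C u → C u' → ch u ≠ ch u' → H u ≠ H u' := by
    intro u u' hu hu' hne he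
    rw [hH, hH] at he
    exact hne (ht2 _ _ (hcu u hu).1 (hcu u' hu').1 he)
  have f1 : ∀ s c, Par p c → x s c = - sg s := by
    intro s c hc
    rw [hx, hD c hc]
    exact (hg c hc).root s
  have f2 : ∀ s u, C u → ¬ Par p u → |x s u| < 1 := by
    intro s u hu hp
    rw [hx]
    refine (hg _ (hcu u hu).1).bnd s u (hcu u hu).2 ?_
    intro he
    rw [he] at hp
    exact hp (hcu u hu).1
  have fr : ∀ s u, C u → -1 < sg s * x (!s) u := by
    intro s u hu
    by_cases hp : Par p u
    · rw [f1 _ _ hp]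
      cases s <;> simp [sg]
    · have := abs_lt.1 (f2 (!s) u hu hp)
      cases s <;> simp [sg] at this ⊢ <;> linarith
  have f5 : ∀ s u u', C u → C u' → Par u u' → x s u ≠ x s u' ∧ y s u ≠ y s u' := by
    intro s u u' hu hu' hp
    rw [hx, hx, hy, hy, (hpar u u' hu hp).2]
    exact (hg _ (hcu u hu).1).edge s u u' (hcu u hu).2 ((hcu u hu).2.tail hp) hp
  obtain ⟨e, he, e1, e2, e2', e3, e4⟩ := exists_scale Par C x y H
    (fun u _ => by rw [hH]; exact ht1 _) (fun s u u' hu hu' hp => (f5 s u u' hu hu' hp).2)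
  obtain ⟨N, hNp, hN⟩ : ∃ N : Bool → V → ℝ, (∀ s, N s p = - sg s) ∧
      ∀ s u, C u → N s u = H u - e * y s u :=
    ⟨fun s u => if u = p then - sg s else H u - e * y s u, fun s => if_pos rfl,
      fun s u hu => if_neg ((hC u).1 hu).2⟩
  obtain ⟨M, hM, heM, m2, m3, m4⟩ := exists_far Par C (Par p) x N e he
    (fun s u u' hu hu' hp => (f5 s u u' hu hu' hp).1) f1 fr
  obtain ⟨Z, hZp, hZ⟩ : ∃ Z : Bool → V → ℝ, (∀ s, Z s p = - (sg s * M)) ∧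
      ∀ s u, C u → Z s u = e * x s u :=
    ⟨fun s u => if u = p then - (sg s * M) else e * x s u, fun s => if_pos rfl,
      fun s u hu => if_neg ((hC u).1 hu).2⟩
  have hsg : ∀ s, sg (!s) = - sg s := by intro s; cases s <;> simp [sg]
  have hss : ∀ s, sg s * sg s = 1 := by intro s; cases s <;> simp [sg]
  have hbN : ∀ s u, C u → |N s u| < 1 := fun s u hu => by rw [hN s u hu]; exact e1 s u hu
  have hcase : ∀ u, ReflTransGen Par p u → u = p ∨ C u := fun u hu => by
    rw [hC]; tauto
  -- a witness for `u`, above it in its own child drawing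
  have hyw : ∀ s u, C u → Present L s u → ch u ∉ L →
      ∃ w, C w ∧ ch w = ch u ∧ Present L (!s) w ∧ sg s * y s u < sg s * y (!s) w := by
    intro s u hu hA hl
    obtain ⟨w, w1, w2, w3⟩ := (hg _ (hcu u hu).1).ywit hl s u (hcu u hu).2 hA
    obtain ⟨w4, w5⟩ := hsub _ _ (hcu u hu).1 w1
    exact ⟨w, w4, w5, w2, by rw [hy, hy, w5]; exact w3⟩
  -- `p` and a vertex below a child of `p`: in the exceptional case a cousin provides the witness
  have hroot : ∀ s u, C u → ¬ Par p u → Present L s u → ∃ w, ReflTransGen Par p w ∧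
      Present L (!s) w ∧
      (N (!s) w - N s p) * (N (!s) w - N s u) + (Z (!s) w - Z s p) * (Z (!s) w - Z s u) < 0 := by
    intro s u hu hp hA
    obtain ⟨w, w1, w2, w3⟩ : ∃ w, C w ∧ Present L (!s) w ∧ sg s * x (!s) w < sg s * x s u := by
      by_cases hE : u ∈ L ∧ Par (ch u) u
      · obtain ⟨p', q1, q2, q3⟩ := h.cousin u hE.1 _ p hE.2 (hcu u hu).1
        obtain ⟨w, w1, w2, w3⟩ := (hg p' q1).pos q3 q2
        obtain ⟨w4, w5⟩ := hsub _ _ q1 w1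
        have h1 := (hg _ (hcu u hu).1).exc u hE.1 hE.2
        have hs : s = true := by
          cases s with
          | true => rfl
          | false => exact absurd hE.1 (hA rfl)
        subst hs
        rw [← w5, ← hx] at w3
        rw [← hx] at h1
        exact ⟨w, w4, fun _ => w2, by simp [sg]; linarith⟩
      · obtain ⟨w, w1, w2, w3⟩ := (hg _ (hcu u hu).1).xwit s u (hcu u hu).2
          (fun h1 => hp (by rw [h1]; exact (hcu u hu).1)) hA hE
        obtain ⟨w4, w5⟩ := hsub _ _ (hcu u hu).1 w1
        exact ⟨w, w4, w2, by rw [hx, hx, w5]; exact w3⟩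
    refine ⟨w, ((hC w).1 w1).1, w2, ?_⟩
    rw [hNp, hZp, hZ _ _ w1, hZ _ _ hu]
    exact m4 s u w w3
  -- two vertices below different children of `p`
  have hcross : ∀ s u u', C u → C u' → ch u ≠ ch u' → 0 < sg s * (H u - H u') →
      Present L s u → ∃ w, ReflTransGen Par p w ∧ Present L (!s) w ∧
      (N (!s) w - N s u) * (N (!s) w - N s u') + (Z (!s) w - Z s u) * (Z (!s) w - Z s u') < 0 := by
    intro s u u' hu hu' hne hpos hA
    have hl : ch u ∉ L := by
      intro hl
      have h1 := hleaf u hu hl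
      have h2 := (ht4 _ hl (hcu u hu).1).2 (ch u') (hcu u' hu').1 hne.symm
      rw [← hH, ← hH] at h2
      cases s with
      | true => simp [sg] at hpos; linarith
      | false => exact hA rfl (h1 ▸ hl)
    obtain ⟨w, w1, w2, w3, w4⟩ := hyw s u hu hA hl
    refine ⟨w, ((hC w).1 w1).1, w3, ?_⟩
    have h1 := e4 s u u' w hpos w4
    have h2 : H w = H u := by rw [hH, hH, w2]
    rw [hN _ _ w1, hN _ _ hu, hN _ _ hu', hZ _ _ w1, hZ _ _ hu, hZ _ _ hu', h2]
    have := mul_neg_of_pos_of_neg he h1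
    linarith
  refine ⟨N, Z, hNp, ?_, ?_, ?_, ?_, ?_, ?_, ?_, ?_⟩
  · exact fun s u hu hp => hbN s u ((hC u).2 ⟨hu, hp⟩)
  · intro s u hu hp hA hE
    have hu' : C u := (hC u).2 ⟨hu, hp⟩
    have hl : ch u ∉ L := by
      intro hl
      have h1 := hleaf u hu' hl
      exact hE ⟨h1 ▸ hl, by rw [h1]; exact (hcu u hu').1⟩
    obtain ⟨w, w1, w2, w3, w4⟩ := hyw s u hu' hA hl
    refine ⟨w, ((hC w).1 w1).1, w3, ?_⟩
    rw [hN _ _ w1, hN _ _ hu', hH, hH, w2]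
    have := mul_pos he (sub_pos.2 w4)
    linarith
  · intro u hl hp
    rw [hN _ _ (hDC u hp)]
    refine e2' _ _ (hDC u hp) ?_
    rw [hH, hD u hp]
    exact (ht4 u hl hp).1
  · rintro hno ⟨u, hp⟩
    have hu := hDC u hp
    refine ⟨u, ((hC u).1 hu).1, hno u hp, ?_⟩
    rw [hN _ _ hu]
    refine e2 _ _ hu ?_
    rw [hH]
    exact ht3 hno _
  · intro hp s u hu _
    refine ⟨p, .refl, fun _ => hp, ?_⟩
    rw [hZp, hsg]
    have h1 : sg s * -(-sg s * M) = M := by linear_combination M * hss s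
    rw [h1]
    rcases hcase u hu with rfl | hu
    · rw [hZp]
      have h2 : sg s * -(sg s * M) = - M := by linear_combination (-M) * hss s
      linarith
    · rw [hZ _ _ hu]
      have h2 := fr (!s) u hu
      rw [hsg, Bool.not_not] at h2
      have h3 := mul_pos he (show 0 < 1 - sg s * x s u by linarith)
      linarith
  · intro s u u' hu hu' hp
    rcases hcase u hu with rfl | hu
    · have hc := hDC u' hp
      have h1 := abs_lt.1 (hbN s u' hc)
      rw [hNp, hZp, hZ _ _ hc, f1 s u' hp]
      constructor
      · cases s <;> simp [sg] <;> intro h2 <;> linarith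
      · cases s <;> simp [sg] <;> intro h2 <;> linarith
    · obtain ⟨hc, hcc⟩ := hpar u u' hu hp
      have h1 : H u' = H u := by rw [hH, hH, hcc]
      have h2 := f5 s u u' hu hc hp
      rw [hN _ _ hu, hN _ _ hc, hZ _ _ hu, hZ _ _ hc, h1]
      simp [he.ne', h2.1, h2.2]
  · intro s u u' hu hu' hp w hw
    replace hu := hcase u hu
    replace hw := hcase w hw
    rcases hu with rfl | hu
    · right
      have hc := hDC u' hp
      rcases hw with rfl | hw
      · have h1 := abs_lt.1 (hbN s u' hc)
        rw [hNp, hZp, hNp, hZp, hsg, hZ _ _ hc, f1 s u' hp]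
        cases s <;> simp [sg] <;> nlinarith
      · have := m3 s u' w hp hw
        rw [hNp, hZp, hZ _ _ hc, hZ _ _ hw]
        exact this
    · obtain ⟨hc, hcc⟩ := hpar u u' hu hp
      rcases hw with rfl | hw
      · have := m2 s u u' hu hc hp
        rw [hNp, hZp, hsg, hZ _ _ hu, hZ _ _ hc]
        simpa using this
      · have h1 : H u' = H u := by rw [hH, hH, hcc]
        rw [hN _ _ hu, hN _ _ hc, hN _ _ hw, hZ _ _ hu, hZ _ _ hc, hZ _ _ hw, h1]
        by_cases hwu : ch w = ch u
        · have h2 : H w = H u := by rw [hH, hH, hwu]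
          have h3 := (hg _ (hcu u hu).1).adj s u u' (hcu u hu).2 ((hcu u hu).2.tail hp) hp w
            (hwu ▸ (hcu w hw).2)
          have k1 := hx s u'
          have k2 := hy s u'
          have k3 := hx (!s) w
          have k4 := hy (!s) w
          rw [hcc] at k1 k2
          rw [hwu] at k3 k4
          rw [← k1, ← k2, ← k3, ← k4, ← hx, ← hy] at h3
          rw [h2]
          have he2 := mul_pos he he
          rcases h3 with h3 | h3
          · left
            have := mul_neg_of_pos_of_neg he2 h3
            linarith
          · right
            have := mul_neg_of_pos_of_neg he2 h3
            linarith
        · rcases e3 s u u' w hu hc hp (hHne w u hw hu hwu) with h3 | h3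
          · left
            have := mul_neg_of_pos_of_neg he h3
            linarith
          · right
            have := mul_neg_of_pos_of_neg he h3
            linarith
  · intro s u u' hu hu' hne hp hp' hA hA'
    replace hu := hcase u hu
    replace hu' := hcase u' hu'
    rcases hu with rfl | hu <;> rcases hu' with rfl | hu'
    · exact absurd rfl hne
    · exact hroot s u' hu' hp hA'
    · obtain ⟨w, w1, w2, w3⟩ := hroot s u hu hp' hA
      exact ⟨w, w1, w2, by linarith⟩
    · by_cases hcc : ch u' = ch u
      · obtain ⟨w, w1, w2, w3⟩ := (hg _ (hcu u hu).1).nonadj s u u' (hcu u hu).2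
          (hcc ▸ (hcu u' hu').2) hne hp hp' hA hA'
        obtain ⟨hw, hwu⟩ := hsub _ _ (hcu u hu).1 w1
        refine ⟨w, ((hC w).1 hw).1, w2, ?_⟩
        have h1 : H u' = H u := by rw [hH, hH, hcc]
        have h2 : H w = H u := by rw [hH, hH, hwu]
        have k1 := hx s u'
        have k2 := hy s u'
        have k3 := hx (!s) w
        have k4 := hy (!s) w
        rw [hcc] at k1 k2
        rw [hwu] at k3 k4
        rw [← k1, ← k2, ← k3, ← k4, ← hx, ← hy] at w3
        rw [hN _ _ hu, hN _ _ hu', hN _ _ hw, hZ _ _ hu, hZ _ _ hu', hZ _ _ hw, h1, h2]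
        have := mul_neg_of_pos_of_neg (mul_pos he he) w3
        linarith
      · have hne' := hHne u u' hu hu' (Ne.symm hcc)
        have h1 : sg s * (H u - H u') ≠ 0 :=
          mul_ne_zero (by cases s <;> simp [sg]) (sub_ne_zero.2 hne')
        rcases lt_or_gt_of_ne h1 with h2 | h2
        · obtain ⟨w, w1, w2, w3⟩ := hcross s u' u hu' hu hcc (by linarith) hA'
          exact ⟨w, w1, w2, by linarith⟩
        · exact hcross s u u' hu hu' (Ne.symm hcc) h2 hA

lemma exists_good {V : Type} [Finite V] {Par : V → V → Prop} {d : V → ℕ} {L : Set V}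
    (h : Rooted Par d L) (v : V) : ∃ X Y, Good Par L v X Y := by
  obtain ⟨B, hB⟩ : ∃ B, ∀ v, d v ≤ B := by
    obtain ⟨B, hB⟩ := (Set.finite_range d).bddAbove
    exact ⟨B, fun v => hB ⟨v, rfl⟩⟩
  have key : ∀ n v, B < d v + n → ∃ X Y, Good Par L v X Y := by
    intro n
    induction n with
    | zero => exact fun v hv => absurd (hB v) (by omega)
    | succ n ih =>
      intro v hv
      refine exists_good_step h v fun c hc => ih c ?_
      have := h.depth _ _ hc
      omega
  exact key (B + 1) v (by omega)

/-! ### Rooted trees as parent relations -/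

section Tree

variable {V : Type} {T : SimpleGraph V}

lemma parent_or_of_adj (hT : T.IsTree) (r : V) {u v : V} (h : T.Adj u v) :
    IsParentOf T r u v ∨ IsParentOf T r v u := by
  have h1 := hT.dist_ne_of_adj r h
  have h2 := h.diff_dist_adj (u := r)
  rcases h2 with h2 | h2 | h2
  · exact absurd h2.symm h1
  · exact Or.inl ⟨h, h2.symm⟩
  · exact Or.inr ⟨h.symm, by omega⟩

/-- Two parents of `v` would give two different shortest paths from `r` to `v`. -/
lemma parent_unique (hT : T.IsTree) (r : V) {p q v : V} (hp : IsParentOf T r p v)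
    (hq : IsParentOf T r q v) : p = q := by
  obtain ⟨a, ha⟩ := hT.1.exists_walk_length_eq_dist r p
  obtain ⟨b, hb⟩ := hT.1.exists_walk_length_eq_dist r q
  have ha' : (a.concat hp.1).IsPath := SimpleGraph.Walk.isPath_of_length_eq_dist _ (by
    rw [SimpleGraph.Walk.length_concat, ha, hp.2])
  have hb' : (b.concat hq.1).IsPath := SimpleGraph.Walk.isPath_of_length_eq_dist _ (by
    rw [SimpleGraph.Walk.length_concat, hb, hq.2])
  have h1 : a.concat hp.1 = b.concat hq.1 :=
    congrArg Subtype.val ((hT.2.subsingleton_path r v).elim ⟨_, ha'⟩ ⟨_, hb'⟩)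
  rw [← SimpleGraph.Walk.penultimate_concat a hp.1, h1, SimpleGraph.Walk.penultimate_concat]

lemma desc_root (hT : T.IsTree) (r v : V) : ReflTransGen (IsParentOf T r) r v := by
  induction hn : T.dist r v generalizing v with
  | zero => rw [hT.1.dist_eq_zero_iff] at hn; rw [hn]
  | succ n ih =>
    obtain ⟨a, ha⟩ := hT.1.exists_walk_length_eq_dist v r
    rw [SimpleGraph.dist_comm, hn] at ha
    cases a with
    | nil => simp at ha
    | @cons _ u _ h a =>
      have h1 : T.dist r u ≤ n := by
        rw [SimpleGraph.dist_comm]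
        simp only [SimpleGraph.Walk.length_cons, Nat.add_right_cancel_iff] at ha
        exact ha ▸ SimpleGraph.dist_le a
      rcases parent_or_of_adj hT r h with h2 | h2
      · have := h2.2
        omega
      · exact (ih u (by have := h2.2; omega)).tail h2

lemma rooted_of_sparse (hT : T.IsTree) (r : V) {L : Set V} (hL : SparseLeafSet T r L) :
    Rooted (IsParentOf T r) (T.dist r) L where
  depth p v h := h.2
  unique p q v := parent_unique hT r
  leaf u hu w hw := by
    obtain ⟨-, h1, h2⟩ := hL
    obtain ⟨_, _, p, hp, _⟩ := (h2 u hu).1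
    have h3 : p = w := (h1 u hu).unique hp.1.symm hw.1
    have h4 := hp.2
    have h5 := hw.2
    rw [h3] at h4
    omega
  single u hu p c hp hc hne := ((hL.2.2 u hu).2.1 c ⟨hne.symm, p, hp, hc⟩).2
  cousin u hu p q hp hq := by
    obtain ⟨w, ⟨q', p1, p', -, h1, h2, h3, h4⟩, h5, h6⟩ := (hL.2.2 u hu).2.2
    obtain rfl := parent_unique hT r hp h3
    obtain rfl := parent_unique hT r hq h1
    refine ⟨p', h2, ⟨w, h4⟩, fun w' hw' => ?_⟩
    by_cases hww : w = w'
    · exact hww ▸ h5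
    · exact h6 w' ⟨hww, p', h4, hw'⟩

end Tree

/-! ### From strips and disks to β-regions -/

/-- For `β ≥ 1` the open β-region contains the open disk with diameter `pq`. -/
lemma mem_Ropen {p q w : Plane} {β : ℝ≥0∞} (hβ : 1 ≤ β) (h : ⟪w - p, w - q⟫ < 0) :
    w ∈ Ropen p q β := by
  have e1 : ⟪w - p, w - q⟫ = ⟪w - p, w - p⟫ - ⟪w - p, q - p⟫ := by
    rw [← inner_sub_right]; congr 1; abel
  have e2 : ⟪w - p, w - q⟫ = ⟪w - q, w - q⟫ - ⟪w - q, p - q⟫ := by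
    rw [real_inner_comm, ← inner_sub_right]; congr 1; abel
  have n1 := real_inner_self_nonneg (x := w - p)
  have n2 := real_inner_self_nonneg (x := w - q)
  unfold Ropen
  split_ifs with ht
  · exact ⟨by linarith, by linarith⟩
  · have hb : 1 ≤ β.toReal := by
      rw [← ENNReal.toReal_one]; exact ENNReal.toReal_mono ht hβ
    generalize β.toReal = b at hb
    have hd : dist p q = ‖q - p‖ := by rw [dist_comm, dist_eq_norm]
    have hd' : dist p q = ‖p - q‖ := dist_eq_norm _ _
    constructor
    · rw [Metric.mem_ball, dist_eq_norm, hd]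
      refine lt_of_pow_lt_pow_left₀ 2 (by positivity) ?_
      have : w - ((1 - b / 2) • p + (b / 2) • q) = (w - p) - (b / 2) • (q - p) := by module
      rw [this, norm_sub_sq_real, norm_smul, inner_smul_right, ← real_inner_self_eq_norm_sq (w - p),
        Real.norm_eq_abs, mul_pow, sq_abs]
      nlinarith
    · rw [Metric.mem_ball, dist_eq_norm, hd']
      refine lt_of_pow_lt_pow_left₀ 2 (by positivity) ?_
      have : w - ((b / 2) • p + (1 - b / 2) • q) = (w - q) - (b / 2) • (p - q) := by module
      rw [this, norm_sub_sq_real, norm_smul, inner_smul_right, ← real_inner_self_eq_norm_sq (w - q),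
        Real.norm_eq_abs, mul_pow, sq_abs]
      nlinarith

/-- For every `β ≥ 1` the closed β-region lies in the closed strip. -/
lemma not_mem_Rclosed {p q w : Plane} {β : ℝ≥0∞} (hβ : 1 ≤ β)
    (h : ⟪w - p, q - p⟫ < 0 ∨ ⟪w - q, p - q⟫ < 0) : w ∉ Rclosed p q β := by
  unfold Rclosed
  split_ifs with ht
  · rintro ⟨h1, h2⟩
    rcases h with h | h <;> linarith
  · have hb : 1 ≤ β.toReal := by
      rw [← ENNReal.toReal_one]; exact ENNReal.toReal_mono ht hβ
    generalize β.toReal = b at hb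
    have hd : dist p q = ‖q - p‖ := by rw [dist_comm, dist_eq_norm]
    have hd' : dist p q = ‖p - q‖ := dist_eq_norm _ _
    rintro ⟨h1, h2⟩
    rcases h with h | h
    · rw [Metric.mem_closedBall, dist_eq_norm, hd] at h1
      have h3 := pow_le_pow_left₀ (norm_nonneg _) h1 2
      have : w - ((1 - b / 2) • p + (b / 2) • q) = (w - p) - (b / 2) • (q - p) := by module
      rw [this, norm_sub_sq_real, norm_smul, inner_smul_right, Real.norm_eq_abs, mul_pow,
        sq_abs] at h3
      nlinarith [sq_nonneg ‖w - p‖]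
    · rw [Metric.mem_closedBall, dist_eq_norm, hd'] at h2
      have h3 := pow_le_pow_left₀ (norm_nonneg _) h2 2
      have : w - ((b / 2) • p + (1 - b / 2) • q) = (w - q) - (b / 2) • (p - q) := by module
      rw [this, norm_sub_sq_real, norm_smul, inner_smul_right, Real.norm_eq_abs, mul_pow,
        sq_abs] at h3
      nlinarith [sq_nonneg ‖w - q‖]

lemma inner_points (a b c d a' b' c' d' : ℝ) :
    ⟪(!₂[a, b] : Plane) - !₂[c, d], !₂[a', b'] - !₂[c', d']⟫ =
      (a - c) * (a' - c') + (b - d) * (b' - d') := by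
  simp [PiLp.inner_apply, Fin.sum_univ_two]
  ring

/-! ### The drawings -/

/-- If `L` is a sparse set of leaves of the rooted tree `(T, r)`, then the pair
`⟨T, T ∖ L⟩` admits a pair of drawings that is an MW-β drawing simultaneously for
every β ∈ [1,∞]. -/
theorem sparse_pruning_mw {V : Type} [Fintype V] (T : SimpleGraph V) (hT : T.IsTree)
    (r : V) (L : Set V) (hL : SparseLeafSet T r L) :
    ∃ (Γ₀ : V → Plane) (Γ₁ : {v : V | v ∉ L} → Plane),
      ∀ β : ℝ≥0∞, 1 ≤ β →
        IsMWDrawing T (T.induce {v : V | v ∉ L}) Γ₀ Γ₁ β := by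
  obtain ⟨X, Y, hg⟩ := exists_good (rooted_of_sparse hT r hL) r
  have hd := desc_root hT r
  obtain ⟨G, hG⟩ : ∃ G : Bool → V → Plane, ∀ s u, G s u = !₂[X s u, Y s u] := ⟨_, fun _ _ => rfl⟩
  have hadj : ∀ s u v, T.Adj u v → ∀ w, ⟪G (!s) w - G s u, G s v - G s u⟫ < 0 ∨
      ⟪G (!s) w - G s v, G s u - G s v⟫ < 0 := by
    intro s u v huv w
    simp only [hG, inner_points]
    rcases parent_or_of_adj hT r huv with h | h
    · exact hg.adj s u v (hd u) (hd v) h w (hd w)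
    · exact (hg.adj s v u (hd v) (hd u) h w (hd w)).symm
  have hnon : ∀ s u v, u ≠ v → ¬ T.Adj u v → Present L s u → Present L s v →
      ∃ w, Present L (!s) w ∧ ⟪G (!s) w - G s u, G (!s) w - G s v⟫ < 0 := by
    intro s u v hne huv hu hv
    obtain ⟨w, -, w2, w3⟩ := hg.nonadj s u v (hd u) (hd v) hne (fun h => huv h.1)
      (fun h => huv h.1.symm) hu hv
    exact ⟨w, w2, by simpa only [hG, inner_points] using w3⟩
  have hinj : ∀ s u v, Present L s u → Present L s v → G s u = G s v → u = v := by
    intro s u v hu hv he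
    by_contra hne
    by_cases huv : T.Adj u v
    · rcases hadj s u v huv u with h | h <;> rw [he] at h <;> simp at h
    · obtain ⟨w, -, h⟩ := hnon s u v hne huv hu hv
      rw [he] at h
      exact absurd (real_inner_self_nonneg (x := G (!s) w - G s v)) (not_le.2 h)
  -- a point of both drawings would lie in the closed strip of an edge at it
  have hdisj : ∀ u w, G true u ≠ G false w := by
    intro u w he
    obtain ⟨v, hv⟩ : ∃ v, T.Adj u v := by
      obtain ⟨l, hl⟩ := hL.1
      obtain ⟨m, hm, -⟩ := hL.2.1 l hl
      have : Nontrivial V := ⟨l, m, hm.ne⟩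
      exact hT.1.preconnected.exists_adj_of_nontrivial u
    rcases hadj true u v hv w with h | h
    · simp [← he] at h
    · simp only [Bool.not_true, ← he] at h
      exact absurd (real_inner_self_nonneg (x := G true u - G true v)) (not_le.2 h)
  refine ⟨G true, fun v => G false v, fun β hβ => ⟨⟨?_, ?_, ?_⟩, ?_, ?_⟩⟩
  · exact fun u v he => hinj true u v (by simp [Present]) (by simp [Present]) he
  · exact fun u v he => Subtype.ext (hinj false u v (fun _ => u.2) (fun _ => v.2) he)
  · rw [Set.disjoint_left]
    rintro _ ⟨u, rfl⟩ ⟨w, hw⟩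
    exact hdisj u w hw.symm
  · refine fun u v hne => ⟨fun h w => not_mem_Rclosed hβ (hadj true u v h w), fun h => ?_⟩
    obtain ⟨w, w1, w2⟩ := hnon true u v hne h (by simp [Present]) (by simp [Present])
    exact ⟨⟨w, w1 rfl⟩, mem_Ropen hβ w2⟩
  · refine fun u v hne => ⟨fun h w => not_mem_Rclosed hβ (hadj false u v h w), fun h => ?_⟩
    obtain ⟨w, -, w2⟩ := hnon false u v (fun he => hne (Subtype.ext he)) h
      (fun _ => u.2) (fun _ => v.2)
    exact ⟨w, mem_Ropen hβ w2⟩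

end
end

section
/- For every integer m ≥ 1 there exist a tree T₀ with 6m+1 vertices and a tree T₁ with 5m+1 vertices (so that |V(T₁)| = 1 + (5/6)·(|V(T₀)|−1)) such that the pair ⟨T₀, T₁⟩ admits a pair of drawings that is an MW-β drawing simultaneously for every β ∈ [1,∞]. -/
/-! The first tree is a root `r` with `N = 5m - 1` children `c i`, the first `m + 1` of which carry
a leaf `a i`; the second is a root `s` with `N` children `d i`, the first of which carries a
leaf `b`. They have `6m + 1` and `5m + 1` vertices.

All vertices other than the roots are placed near the `y`-axis, in the order of heights
`c 0, a 0, b, d 0, c 1, a 1, d 1, c 2, …`; the `c i` lie on `x = -2`, the `a i` on `x = 0`, the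
`d i` on `x = 2`, and `b` on `x = -1`. The roots are placed on the `x`-axis, `r` very far to the
left and `s` very far to the right.

* A strip of two adjacent non-roots is a nearly horizontal slab between consecutive heights, which
  avoids the other tree; the slabs are slightly tilted, so that `s` lies beyond the upper end of the
  slabs of the `c i, a i`, and `r` beyond the lower end of the slab of `b, d 0`.
* A strip of `r` and `c i` ends near the vertical line `x = -2`, left of the second tree; similarly
  for `s` and `d i`.
* Two non-adjacent non-roots of one tree are separated in height by a vertex of the other tree, which
  lies in the disk they span because the vertical gaps exceed the horizontal ones.
* The pairs `r, a i` are witnessed by `b`, which is left of every `a i`, and the pair `s, b` is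
  witnessed by `a 0`, which is right of `b`; the disks here are nearly half-planes near the axis.

The choice of `β` is harmless: for every `β ∈ [1, ∞]` the open β-region contains the open disk
spanned by the two points, and the closed β-region is contained in the closed strip
(`mem_Ropen_of_near`, `not_mem_Rclosed_of_far`). So `WitnessedBy`, a statement about disks and
strips only, is what has to be checked (`witnessed0`, `witnessed1`), by explicit inequalities in the
coordinates. -/

open scoped RealInnerProductSpace ENNReal

noncomputable section

/-! ### Trees from parent functions -/

/-- The rooted tree given by a parent function (a fixed point of `par` is a root). -/
def parentGraph {V : Type*} (par : V → V) : SimpleGraph V :=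
  SimpleGraph.fromRel (fun u v => par u = v)

/-- The edges are the pairs `{v, par v}` with `v` not the root, so there are at most `|V| - 1` of
them, while connectedness forces at least that many. -/
lemma parentGraph_isTree {V : Type*} [Fintype V] (par : V → V) (rank : V → ℕ) (r : V)
    (h : ∀ v, v ≠ r → rank (par v) < rank v) (hr : par r = r) : (parentGraph par).IsTree := by
  classical
  have hreach : ∀ n v, rank v = n → (parentGraph par).Reachable v r := by
    intro n
    induction n using Nat.strong_induction_on with
    | _ n ih =>
      intro v hv
      by_cases hvr : v = r
      · rw [hvr]
      · have h1 := h v hvr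
        refine SimpleGraph.Reachable.trans (SimpleGraph.Adj.reachable ?_)
          (ih (rank (par v)) (by omega) (par v) rfl)
        refine (SimpleGraph.fromRel_adj _ _ _).2 ⟨?_, Or.inl rfl⟩
        intro h2
        rw [← h2] at h1
        exact lt_irrefl _ h1
  have hconn : (parentGraph par).Connected := by
    have : Nonempty V := ⟨r⟩
    exact ⟨fun u v => (hreach _ u rfl).trans (hreach _ v rfl).symm⟩
  refine SimpleGraph.isTree_iff_connected_and_card.2 ⟨hconn, le_antisymm ?_ ?_⟩
  · have hsub : (parentGraph par).edgeSet ⊆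
        (((Finset.univ.erase r).image (fun v => s(v, par v)) : Finset (Sym2 V)) :
          Set (Sym2 V)) := by
      intro e
      induction e using Sym2.ind with
      | _ a b =>
        intro he
        obtain ⟨hne, he⟩ := (SimpleGraph.fromRel_adj _ _ _).1 (SimpleGraph.mem_edgeSet _ |>.1 he)
        simp only [Finset.coe_image, Set.mem_image, Finset.mem_coe, Finset.mem_erase,
          Finset.mem_univ, and_true]
        rcases he with he | he
        · refine ⟨a, ?_, by rw [he]⟩
          rintro rfl
          exact hne (hr.symm.trans he)
        · refine ⟨b, ?_, by rw [he, Sym2.eq_swap]⟩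
          rintro rfl
          exact hne (he.symm.trans hr)
    have h1 := Nat.card_mono (Finset.finite_toSet _) hsub
    have h2 : Nat.card (((Finset.univ.erase r).image (fun v => s(v, par v)) : Finset (Sym2 V)) :
          Set (Sym2 V)) ≤ Fintype.card V - 1 := by
      rw [Nat.card_coe_set_eq, Set.ncard_coe_finset]
      refine Finset.card_image_le.trans ?_
      rw [Finset.card_erase_of_mem (Finset.mem_univ _), Finset.card_univ]
    have h3 : 0 < Fintype.card V := Fintype.card_pos_iff.2 ⟨r⟩
    rw [Nat.card_eq_fintype_card (α := V)]
    omega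
  · exact hconn.card_vert_le_card_edgeSet_add_one

/-! ### Reduction to disks and strips -/

/-- `w` lies in the open disk with diameter `pq`, i.e. in the smallest of the open β-regions. -/
def Near (p q w : Plane) : Prop := ⟪w - p, w - q⟫ < 0

/-- `w` lies outside the closed strip of `p` and `q`, the largest of the closed β-regions. -/
def Far (p q w : Plane) : Prop := ⟪w - p, q - p⟫ < 0 ∨ ⟪w - q, p - q⟫ < 0

lemma Near.symm {p q w : Plane} (h : Near p q w) : Near q p w := by
  unfold Near at *
  rwa [real_inner_comm]

lemma Far.symm {p q w : Plane} (h : Far p q w) : Far q p w := Or.symm h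

/-- The equation of a bounding circle of the β-region of `p` and `q`: a point `w` lies in the open
disk exactly when `⟪w - p, w - p⟫ < β * ⟪w - p, q - p⟫`. -/
lemma norm_sub_sq_center (p q w : Plane) (β : ℝ) :
    ‖w - ((1 - β / 2) • p + (β / 2) • q)‖ ^ 2 =
      (β * dist p q / 2) ^ 2 + (⟪w - p, w - p⟫ - β * ⟪w - p, q - p⟫) := by
  have e : w - ((1 - β / 2) • p + (β / 2) • q) = (w - p) - (β / 2) • (q - p) := by
    module
  rw [e, norm_sub_sq_real, dist_comm, dist_eq_norm, norm_smul, inner_smul_right,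
    real_inner_self_eq_norm_sq, mul_pow, Real.norm_eq_abs, sq_abs]
  ring

lemma inner_near (p q w : Plane) : ⟪w - p, w - q⟫ = ⟪w - p, w - p⟫ - ⟪w - p, q - p⟫ := by
  rw [← inner_sub_right]
  congr 1
  abel

lemma mem_ball_of_near {p q w : Plane} (h : Near p q w) {β : ℝ} (hβ : 1 ≤ β) :
    w ∈ Metric.ball ((1 - β / 2) • p + (β / 2) • q) (β * dist p q / 2) := by
  rw [Metric.mem_ball, dist_eq_norm]
  refine lt_of_pow_lt_pow_left₀ 2 (by positivity) ?_
  rw [norm_sub_sq_center]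
  unfold Near at h
  rw [inner_near] at h
  have h0 : 0 ≤ ⟪w - p, w - p⟫ := real_inner_self_nonneg
  nlinarith

lemma inner_nonneg_of_mem_closedBall {p q w : Plane} {β : ℝ} (hβ : 1 ≤ β)
    (h : w ∈ Metric.closedBall ((1 - β / 2) • p + (β / 2) • q) (β * dist p q / 2)) :
    0 ≤ ⟪w - p, q - p⟫ := by
  rw [Metric.mem_closedBall, dist_eq_norm] at h
  have h1 := pow_le_pow_left₀ (norm_nonneg _) h 2
  rw [norm_sub_sq_center] at h1
  have h0 : 0 ≤ ⟪w - p, w - p⟫ := real_inner_self_nonneg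
  by_contra hc
  push Not at hc
  nlinarith

lemma one_le_toReal {β : ℝ≥0∞} (hβ : 1 ≤ β) (ht : β ≠ ⊤) : 1 ≤ β.toReal := by
  have := ENNReal.toReal_mono ht hβ
  simpa using this

lemma mem_Ropen_of_near {p q w : Plane} (h : Near p q w) {β : ℝ≥0∞} (hβ : 1 ≤ β) :
    w ∈ Ropen p q β := by
  unfold Ropen
  split_ifs with ht
  · have h' := h.symm
    unfold Near at h h'
    rw [inner_near] at h h'
    have h0 : 0 ≤ ⟪w - p, w - p⟫ := real_inner_self_nonneg
    have h1 : 0 ≤ ⟪w - q, w - q⟫ := real_inner_self_nonneg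
    exact ⟨by linarith, by linarith⟩
  · have hb := one_le_toReal hβ ht
    refine ⟨mem_ball_of_near h hb, ?_⟩
    have := mem_ball_of_near h.symm hb
    rwa [dist_comm, add_comm] at this

lemma not_mem_Rclosed_of_far {p q w : Plane} (h : Far p q w) {β : ℝ≥0∞} (hβ : 1 ≤ β) :
    w ∉ Rclosed p q β := by
  unfold Rclosed
  split_ifs with ht
  · rintro ⟨h1, h2⟩
    rcases h with h | h <;> linarith
  · rintro ⟨h1, h2⟩
    have hb := one_le_toReal hβ ht
    rw [dist_comm, add_comm] at h2
    have h1 := inner_nonneg_of_mem_closedBall hb h1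
    have h2 := inner_nonneg_of_mem_closedBall hb h2
    rcases h with h | h <;> linarith

/-- Half of the conditions of a mutual witness drawing: the tree of `par` drawn by `Γ`, with
witnesses drawn by `Γ'`. -/
def WitnessedBy {V W : Type*} (par : V → V) (Γ : V → Plane) (Γ' : W → Plane) : Prop :=
  (∀ u, par u ≠ u → ∀ w, Far (Γ u) (Γ (par u)) (Γ' w)) ∧
  (∀ u v, u ≠ v → par u ≠ v → par v ≠ u → ∃ w, Near (Γ u) (Γ v) (Γ' w))

lemma WitnessedBy.regions {V W : Type*} {par : V → V} {Γ : V → Plane} {Γ' : W → Plane}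
    (h : WitnessedBy par Γ Γ') {β : ℝ≥0∞} (hβ : 1 ≤ β) (u v : V) (huv : u ≠ v) :
    ((parentGraph par).Adj u v → ∀ w, Γ' w ∉ Rclosed (Γ u) (Γ v) β) ∧
    (¬ (parentGraph par).Adj u v → ∃ w, Γ' w ∈ Ropen (Γ u) (Γ v) β) := by
  unfold parentGraph
  rw [SimpleGraph.fromRel_adj]
  constructor
  · rintro ⟨-, rfl | rfl⟩ w
    · exact not_mem_Rclosed_of_far (h.1 u huv.symm w) hβ
    · exact not_mem_Rclosed_of_far (h.1 v huv w).symm hβ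
  · intro hn
    obtain ⟨w, hw⟩ := h.2 u v huv (fun e => hn ⟨huv, Or.inl e⟩) (fun e => hn ⟨huv, Or.inr e⟩)
    exact ⟨w, mem_Ropen_of_near hw hβ⟩

/-- Drawings transfer along relabelings of the vertices. -/
lemma IsMWDrawing.comap {V₀ V₁ W₀ W₁ : Type*} {G₀ : SimpleGraph V₀} {G₁ : SimpleGraph V₁}
    {Γ₀ : V₀ → Plane} {Γ₁ : V₁ → Plane} {β : ℝ≥0∞} (h : IsMWDrawing G₀ G₁ Γ₀ Γ₁ β)
    (e₀ : W₀ ≃ V₀) (e₁ : W₁ ≃ V₁) :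
    IsMWDrawing (G₀.comap e₀) (G₁.comap e₁) (Γ₀ ∘ e₀) (Γ₁ ∘ e₁) β := by
  obtain ⟨⟨i₀, i₁, hd⟩, h₀, h₁⟩ := h
  refine ⟨⟨i₀.comp e₀.injective, i₁.comp e₁.injective, ?_⟩, ?_, ?_⟩
  · rwa [e₀.surjective.range_comp, e₁.surjective.range_comp]
  · intro u v huv
    obtain ⟨ha, hb⟩ := h₀ (e₀ u) (e₀ v) (e₀.injective.ne huv)
    refine ⟨fun h w => ha h (e₁ w), fun h => ?_⟩
    obtain ⟨w, hw⟩ := hb h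
    exact ⟨e₁.symm w, by simpa using hw⟩
  · intro u v huv
    obtain ⟨ha, hb⟩ := h₁ (e₁ u) (e₁ v) (e₁.injective.ne huv)
    refine ⟨fun h w => ha h (e₀ w), fun h => ?_⟩
    obtain ⟨w, hw⟩ := hb h
    exact ⟨e₀.symm w, by simpa using hw⟩

/-! ### The two trees and their drawings -/

/-- The point with coordinates `x` and `y`. -/
def pt (x y : ℝ) : Plane := !₂[x, y]

lemma inner_pt (a b c d e f g h : ℝ) :
    ⟪pt a b - pt c d, pt e f - pt g h⟫ = (a - c) * (e - g) + (b - d) * (f - h) := by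
  simp [pt, PiLp.inner_apply, Fin.sum_univ_two]
  ring

lemma near_pt {a b c d e f : ℝ} (h : (e - a) * (e - c) + (f - b) * (f - d) < 0) :
    Near (pt a b) (pt c d) (pt e f) := by
  unfold Near
  rwa [inner_pt]

lemma far_pt {a b c d e f : ℝ} (h : (e - a) * (c - a) + (f - b) * (d - b) < 0 ∨
    (e - c) * (a - c) + (f - d) * (b - d) < 0) :
    Far (pt a b) (pt c d) (pt e f) := by
  unfold Far
  rwa [inner_pt, inner_pt]

lemma pt_inj {a b c d : ℝ} : pt a b = pt c d ↔ a = c ∧ b = d := by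
  constructor
  · intro h
    have h0 := congrArg (fun p : Plane => p 0) h
    have h1 := congrArg (fun p : Plane => p 1) h
    simp [pt] at h0 h1
    exact ⟨h0, h1⟩
  · rintro ⟨rfl, rfl⟩
    rfl

/-- The vertices of the first tree: a root `r`, its `N` children `c i`, and one child `a j` of
`c j` for each `j < K`. -/
abbrev V0 (N K : ℕ) : Type := Option (Fin N ⊕ Fin K)

/-- The vertices of the second tree: `none` is the leaf `b`, `some none` is the root `s`, and
`some (some i)` is the `i`-th child `d i` of `s`. -/
abbrev V1 (N : ℕ) : Type := Option (Option (Fin N))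

/-- The parent function of the first tree. -/
def par0 {N K : ℕ} (hK : K ≤ N) : V0 N K → V0 N K
  | none => none
  | some (.inl _) => none
  | some (.inr j) => some (.inl (Fin.castLE hK j))

/-- The parent function of the second tree; the leaf `b` is attached to `d 0`. -/
def par1 {N : ℕ} (hN : 0 < N) : V1 N → V1 N
  | none => some (some ⟨0, hN⟩)
  | some none => some none
  | some (some _) => some none

/-- A horizontal distance dominating the square of the height of the drawing. -/
def rootDist (N : ℕ) : ℝ := (32 * N + 100) ^ 2

/-- The drawing of the first tree. -/
def draw0 (N K : ℕ) : V0 N K → Plane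
  | none => pt (-2 - rootDist N) 0
  | some (.inl i) => pt (-2) (32 * (i : ℕ))
  | some (.inr j) => pt 0 (32 * (j : ℕ) + 8)

/-- The drawing of the second tree. -/
def draw1 (N : ℕ) : V1 N → Plane
  | none => pt (-1) 16
  | some none => pt (2 + rootDist N) 0
  | some (some i) => pt 2 (32 * (i : ℕ) + 24)

lemma le_rootDist {N i : ℕ} (h : i < N) : (32 * (i : ℝ) + 100) ^ 2 ≤ rootDist N := by
  unfold rootDist
  gcongr

lemma rootDist_large (N : ℕ) : 10000 ≤ rootDist N := by
  unfold rootDist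
  have : (0 : ℝ) ≤ N := Nat.cast_nonneg N
  nlinarith

lemma cast_add_one_le {i k : ℕ} (h : i < k) : (i : ℝ) + 1 ≤ k := by exact_mod_cast h

/-! ### Verification in coordinates -/

lemma witnessed0 {N K : ℕ} (hK : K ≤ N) :
    WitnessedBy (par0 hK) (draw0 N K) (draw1 N) := by
  have hR := rootDist_large N
  constructor
  · rintro (_ | i | j) hu w
    · exact absurd rfl hu
    · have h0 := le_rootDist i.2
      have h1 : (0 : ℝ) ≤ (i : ℕ) := Nat.cast_nonneg _
      obtain _ | _ | k := w
      · exact far_pt (Or.inl (by nlinarith))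
      · exact far_pt (Or.inl (by nlinarith))
      · have h2 : (0 : ℝ) ≤ (k : ℕ) := Nat.cast_nonneg _
        exact far_pt (Or.inl (by nlinarith [mul_nonneg h1 h2]))
    · have h0 := le_rootDist (j.2.trans_le hK)
      have h1 : (0 : ℝ) ≤ (j : ℕ) := Nat.cast_nonneg _
      obtain _ | _ | k := w
      · rcases Nat.eq_zero_or_pos (j : ℕ) with hj | hj
        · exact far_pt (Or.inl (by simp [hj]; norm_num))
        · have := cast_add_one_le hj
          push_cast at this
          exact far_pt (Or.inr (by simp; nlinarith))
      · exact far_pt (Or.inl (by simp; nlinarith))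
      · rcases lt_or_ge (k : ℕ) (j : ℕ) with hk | hk
        · have := cast_add_one_le hk
          exact far_pt (Or.inr (by simp; nlinarith))
        · have : ((j : ℕ) : ℝ) ≤ (k : ℕ) := by exact_mod_cast hk
          exact far_pt (Or.inl (by simp; nlinarith))
  · -- Between `c i` and a higher `c k` or `a k` the witness is `d i`; `d k` if the `a k` is lower.
    -- For the root the witness is `b`.
    have hcc : ∀ i k : Fin N, i < k → ∃ w, Near (draw0 N K (some (.inl i)))
        (draw0 N K (some (.inl k))) (draw1 N w) := fun i k h =>
      ⟨some (some i), near_pt (by have := cast_add_one_le h; nlinarith)⟩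
    have haa : ∀ i k : Fin K, i < k → ∃ w, Near (draw0 N K (some (.inr i)))
        (draw0 N K (some (.inr k))) (draw1 N w) := fun i k h =>
      ⟨some (some (Fin.castLE hK i)), near_pt (by
        have := cast_add_one_le h
        simp only [Fin.val_castLE]
        nlinarith)⟩
    have hca : ∀ (i : Fin N) (k : Fin K), i ≠ Fin.castLE hK k →
        ∃ w, Near (draw0 N K (some (.inl i))) (draw0 N K (some (.inr k))) (draw1 N w) := by
      intro i k h
      rcases lt_or_gt_of_ne h with h | h
      · exact ⟨some (some i), near_pt (by
          have := cast_add_one_le h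
          simp only [Fin.val_castLE] at this
          nlinarith)⟩
      · exact ⟨some (some (Fin.castLE hK k)), near_pt (by
          have := cast_add_one_le h
          simp only [Fin.val_castLE] at this ⊢
          nlinarith)⟩
    have hra : ∀ k : Fin K, ∃ w, Near (draw0 N K none) (draw0 N K (some (.inr k)))
        (draw1 N w) := fun k =>
      ⟨none, near_pt (by
        have : (0 : ℝ) ≤ (k : ℕ) := Nat.cast_nonneg _
        nlinarith)⟩
    -- The relation `Near` is symmetric, so these four facts cover all ordered pairs.
    rintro (_ | i | i) (_ | k | k) huv h1 h2
    · exact absurd rfl huv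
    · exact absurd rfl h2
    · exact hra k
    · exact absurd rfl h1
    · have : i ≠ k := fun e => huv (by rw [e])
      rcases lt_or_gt_of_ne this with h | h
      · exact hcc i k h
      · exact (hcc k i h).imp fun _ => Near.symm
    · exact hca i k (fun e => h2 (by rw [e]; rfl))
    · exact (hra i).imp fun _ => Near.symm
    · exact (hca k i (fun e => h1 (by rw [e]; rfl))).imp fun _ => Near.symm
    · have : i ≠ k := fun e => huv (by rw [e])
      rcases lt_or_gt_of_ne this with h | h
      · exact haa i k h
      · exact (haa k i h).imp fun _ => Near.symm

lemma witnessed1 {N K : ℕ} (hN : 0 < N) (hK0 : 0 < K) :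
    WitnessedBy (par1 hN) (draw1 N) (draw0 N K) := by
  have hR := rootDist_large N
  constructor
  · rintro (_ | _ | i) hu w
    · obtain _ | k | k := w
      · exact far_pt (Or.inl (by simp; nlinarith))
      · rcases Nat.eq_zero_or_pos (k : ℕ) with hj | hj
        · exact far_pt (Or.inl (by simp [hj]; norm_num))
        · have := cast_add_one_le hj
          push_cast at this
          exact far_pt (Or.inr (by simp; nlinarith))
      · rcases Nat.eq_zero_or_pos (k : ℕ) with hj | hj
        · exact far_pt (Or.inl (by simp [hj]; norm_num))
        · have := cast_add_one_le hj
          push_cast at this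
          exact far_pt (Or.inr (by simp; nlinarith))
    · exact absurd rfl hu
    · have h0 := le_rootDist i.2
      have h1 : (0 : ℝ) ≤ (i : ℕ) := Nat.cast_nonneg _
      obtain _ | k | k := w
      · exact far_pt (Or.inl (by nlinarith))
      · have h2 : (0 : ℝ) ≤ (k : ℕ) := Nat.cast_nonneg _
        exact far_pt (Or.inl (by nlinarith [mul_nonneg h1 h2]))
      · have h2 : (0 : ℝ) ≤ (k : ℕ) := Nat.cast_nonneg _
        exact far_pt (Or.inl (by nlinarith [mul_nonneg h1 h2]))
  · -- The witness is the `c` with the index of the higher vertex, or `a 0` for the pair of `b` and `s`.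
    have hdd : ∀ i k : Fin N, i < k → ∃ w, Near (draw1 N (some (some i)))
        (draw1 N (some (some k))) (draw0 N K w) := fun i k h =>
      ⟨some (.inl k), near_pt (by have := cast_add_one_le h; nlinarith)⟩
    have hbd : ∀ i : Fin N, i ≠ ⟨0, hN⟩ → ∃ w, Near (draw1 N none)
        (draw1 N (some (some i))) (draw0 N K w) := fun i h =>
      ⟨some (.inl i), near_pt (by
        have h3 : 0 < (i : ℕ) := Nat.pos_of_ne_zero (fun e => h (Fin.ext e))
        have := cast_add_one_le h3
        push_cast at this
        nlinarith)⟩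
    have hbs : ∃ w, Near (draw1 N none) (draw1 N (some none)) (draw0 N K w) :=
      ⟨some (.inr ⟨0, hK0⟩), near_pt (by simp; nlinarith)⟩
    rintro (_ | _ | i) (_ | _ | k) huv h1 h2
    · exact absurd rfl huv
    · exact hbs
    · exact hbd k (fun e => h1 (by rw [e]; rfl))
    · exact hbs.imp fun _ => Near.symm
    · exact absurd rfl huv
    · exact absurd rfl h2
    · exact (hbd i (fun e => h2 (by rw [e]; rfl))).imp fun _ => Near.symm
    · exact absurd rfl h1
    · have : i ≠ k := fun e => huv (by rw [e])
      rcases lt_or_gt_of_ne this with h | h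
      · exact hdd i k h
      · exact (hdd k i h).imp fun _ => Near.symm

lemma isDrawingPair_draw (N K : ℕ) : IsDrawingPair (draw0 N K) (draw1 N) := by
  have hR := rootDist_large N
  refine ⟨?_, ?_, ?_⟩
  · rintro (_ | i | i) (_ | k | k) h <;> obtain ⟨hx, hy⟩ := pt_inj.1 h
    all_goals first
      | rfl
      | (exfalso; linarith)
      | (have h3 : ((i : ℕ) : ℝ) = (k : ℕ) := by linarith
         have h4 : i = k := Fin.ext (by exact_mod_cast h3)
         rw [h4])
  · rintro (_ | _ | i) (_ | _ | k) h <;> obtain ⟨hx, hy⟩ := pt_inj.1 h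
    all_goals first
      | rfl
      | (exfalso; linarith)
      | (have h3 : ((i : ℕ) : ℝ) = (k : ℕ) := by linarith
         have h4 : i = k := Fin.ext (by exact_mod_cast h3)
         rw [h4])
  · rw [Set.disjoint_left]
    rintro _ ⟨u, rfl⟩ ⟨v, h⟩
    obtain _ | _ | k := v <;> obtain _ | i | i := u <;> obtain ⟨hx, hy⟩ := pt_inj.1 h <;>
      linarith

lemma isTree0 {N K : ℕ} (hK : K ≤ N) : (parentGraph (par0 hK)).IsTree := by
  refine parentGraph_isTree _
    (fun v => match v with | none => 0 | some (.inl _) => 1 | some (.inr _) => 2) none ?_ rfl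
  rintro (_ | i | i) h
  · exact absurd rfl h
  · exact Nat.zero_lt_one
  · exact Nat.one_lt_two

lemma isTree1 {N : ℕ} (hN : 0 < N) : (parentGraph (par1 hN)).IsTree := by
  refine parentGraph_isTree _
    (fun v => match v with | none => 2 | some none => 0 | some (some _) => 1) (some none) ?_ rfl
  rintro (_ | _ | i) h
  · exact Nat.one_lt_two
  · exact absurd rfl h
  · exact Nat.zero_lt_one

/-- For every integer m ≥ 1 there are a tree with 6m+1 vertices and a tree with
5m+1 vertices (so that |V(T₁)| = 1 + (5/6)(|V(T₀)| − 1)) such that the pair admits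
a pair of drawings that is an MW-β drawing simultaneously for every β ∈ [1,∞]. -/
theorem exists_tree_pair_differing_by_linearly_many_leaves (m : ℕ) (hm : 1 ≤ m) :
    ∃ (G₀ : SimpleGraph (Fin (6 * m + 1))) (G₁ : SimpleGraph (Fin (5 * m + 1))),
      G₀.IsTree ∧ G₁.IsTree ∧
      ∃ (Γ₀ : Fin (6 * m + 1) → Plane) (Γ₁ : Fin (5 * m + 1) → Plane),
        ∀ β : ℝ≥0∞, 1 ≤ β → IsMWDrawing G₀ G₁ Γ₀ Γ₁ β := by
  have hN : 0 < 5 * m - 1 := by omega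
  have hK : m + 1 ≤ 5 * m - 1 := by omega
  let e₀ : Fin (6 * m + 1) ≃ V0 (5 * m - 1) (m + 1) :=
    (Fintype.equivFinOfCardEq (by simp; omega)).symm
  let e₁ : Fin (5 * m + 1) ≃ V1 (5 * m - 1) :=
    (Fintype.equivFinOfCardEq (by simp; omega)).symm
  refine ⟨(parentGraph (par0 hK)).comap e₀, (parentGraph (par1 hN)).comap e₁,
    (SimpleGraph.Iso.comap e₀ _).isTree_iff.2 (isTree0 hK),
    (SimpleGraph.Iso.comap e₁ _).isTree_iff.2 (isTree1 hN),
    draw0 _ _ ∘ e₀, draw1 _ ∘ e₁, fun β hβ => ?_⟩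
  exact IsMWDrawing.comap ⟨isDrawingPair_draw _ _, (witnessed0 hK).regions hβ,
    (witnessed1 hN m.succ_pos).regions hβ⟩ e₀ e₁

end
end
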